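/- arXiv:math/0510624 — 14 statements merged into one kernel-verified Lean document; each statement's English description precedes it below -/
import Mathlib

section
/- Let F be a field, n ≥ 1, and let A, B ∈ M(n,F). Then A and B are M(n,F)-conjugated if and only if A_s and B_s are GL(n,F)-conjugated, i.e. there exists an invertible matrix g ∈ M(n,F) with B_s = g A_s g^{−1}. -/
/-!
Write `e_A` for the idempotent of `A`, and `P_j` for any idempotent with range `Im (A ^ j)`.

*From `A_s`, `B_s` to `A`, `B`.* Since `A * P_j` has range `Im (A ^ (j + 1))`, it equals
`P_{j+1} * (A * P_j)`, which is primarily conjugated to `A * P_j * P_{j+1} = A * P_{j+1}`.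
Starting from `P_0 = 1` and ending with `P_n = e_A`, this conjugates `A` to `A * e_A = A_s`
(`semigroupConj_mul_of_range_eq`). Similarity of `A_s` and `B_s` is itself a primary conjugation.

*From `A`, `B` to `A_s`, `B_s`.* The transitive closure of primary conjugation is contained in
shift equivalence: there are intertwiners `U`, `V` with `U * V = A ^ k` and `V * U = B ^ k`
(`ShiftEquiv.of_semigroupConj`), so no idempotents are needed for the intermediate matrices of a
chain. Intertwiners respect the Fitting decompositions (`mul_eq_mul_of_intertwine`), and `A` is
injective on `Im e_A`; hence `V` embeds `Im e_A` in `Im e_B`, and `U` embeds `Im e_B` in `Im e_A`.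
The two images therefore have the same dimension, and so do the two kernels. Gluing `V` on
`Im e_A` with any isomorphism `ker e_A ≃ ker e_B` gives an invertible matrix intertwining `A_s`
and `B_s`.
-/

/-- Primary conjugation in the multiplicative semigroup `M(n,F)`:
`A` and `B` are primarily conjugated if `A = X*Y` and `B = Y*X` for some `X, Y`. -/
def PrimConj {F : Type*} [Field F] {n : ℕ} (A B : Matrix (Fin n) (Fin n) F) : Prop :=
  ∃ X Y : Matrix (Fin n) (Fin n) F, A = X * Y ∧ B = Y * X

/-- `M(n,F)`-conjugation: the transitive closure of primary conjugation. -/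
def SemigroupConj {F : Type*} [Field F] {n : ℕ} (A B : Matrix (Fin n) (Fin n) F) : Prop :=
  Relation.TransGen PrimConj A B

open Matrix

section Helpers

variable {F : Type*} [Field F] {n : ℕ}

/-- `e` is the Fitting idempotent of `A`: the projection onto `Im (A ^ n)` along `ker (A ^ n)`. -/
structure IsFitting (A e : Matrix (Fin n) (Fin n) F) : Prop where
  idem : e * e = e
  range_eq : LinearMap.range (mulVecLin e) = LinearMap.range (mulVecLin (A ^ n))
  ker_eq : LinearMap.ker (mulVecLin e) = LinearMap.ker (mulVecLin (A ^ n))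

/-- Shift equivalence of matrices (with some lag `k`). -/
def ShiftEquiv (A B : Matrix (Fin n) (Fin n) F) : Prop :=
  ∃ (k : ℕ) (U V : Matrix (Fin n) (Fin n) F),
    A * U = U * B ∧ V * A = B * V ∧ U * V = A ^ k ∧ V * U = B ^ k

theorem PrimConj.symm {A B : Matrix (Fin n) (Fin n) F} (h : PrimConj A B) : PrimConj B A := by
  obtain ⟨X, Y, hA, hB⟩ := h
  exact ⟨Y, X, hB, hA⟩

theorem SemigroupConj.symm {A B : Matrix (Fin n) (Fin n) F} (h : SemigroupConj A B) :
    SemigroupConj B A := by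
  induction h with
  | single h => exact .single h.symm
  | tail _ h ih => exact .head h.symm ih

theorem pow_intertwine {A B V : Matrix (Fin n) (Fin n) F} (h : V * A = B * V) (k : ℕ) :
    V * A ^ k = B ^ k * V := by
  have : SemiconjBy V A B := h
  exact this.pow_right k

theorem ShiftEquiv.of_primConj {A B : Matrix (Fin n) (Fin n) F} (h : PrimConj A B) :
    ShiftEquiv A B := by
  obtain ⟨X, Y, rfl, rfl⟩ := h
  exact ⟨1, X, Y, by rw [mul_assoc], by rw [mul_assoc], by simp, by simp⟩

theorem ShiftEquiv.trans {A B C : Matrix (Fin n) (Fin n) F} (h : ShiftEquiv A B)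
    (h' : ShiftEquiv B C) : ShiftEquiv A C := by
  obtain ⟨k, U, V, h1, h2, h3, h4⟩ := h
  obtain ⟨l, U', V', h1', h2', h3', h4'⟩ := h'
  refine ⟨l + k, U * U', V' * V, ?_, ?_, ?_, ?_⟩
  · rw [← mul_assoc, h1, mul_assoc, h1', mul_assoc]
  · rw [mul_assoc, h2, ← mul_assoc, h2', mul_assoc]
  · calc U * U' * (V' * V) = U * (U' * V') * V := by simp only [mul_assoc]
      _ = A ^ (l + k) := by rw [h3', pow_intertwine h1.symm, mul_assoc, h3, pow_add]
  · calc V' * V * (U * U') = V' * (V * U) * U' := by simp only [mul_assoc]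
      _ = C ^ (l + k) := by rw [h4, pow_intertwine h2', mul_assoc, h4', ← pow_add, add_comm]

theorem ShiftEquiv.of_semigroupConj {A B : Matrix (Fin n) (Fin n) F} (h : SemigroupConj A B) :
    ShiftEquiv A B := by
  induction h with
  | single h => exact .of_primConj h
  | tail _ h ih => exact ih.trans (.of_primConj h)

theorem mul_eq_right_of_range_le {P Q : Matrix (Fin n) (Fin n) F} (hP : P * P = P)
    (h : LinearMap.range (mulVecLin Q) ≤ LinearMap.range (mulVecLin P)) : P * Q = Q := by
  refine Matrix.ext_of_mulVec_single fun i => ?_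
  obtain ⟨y, hy⟩ := h ⟨Pi.single i 1, rfl⟩
  simp only [mulVecLin_apply] at hy
  rw [← mulVec_mulVec, ← hy, mulVec_mulVec, hP]

theorem exists_idem_range_eq (W : Submodule F (Fin n → F)) :
    ∃ P : Matrix (Fin n) (Fin n) F, P * P = P ∧ LinearMap.range (mulVecLin P) = W := by
  obtain ⟨W', hW⟩ := W.exists_isCompl
  refine ⟨LinearMap.toMatrix' (W.projection W' hW), ?_, ?_⟩
  · rw [← LinearMap.toMatrix'_mul]
    exact congrArg _ (Submodule.isIdempotentElem_projection hW)
  · rw [← Matrix.toLin'_apply', Matrix.toLin'_toMatrix']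
    exact Submodule.range_projection hW

/-- Truncating `A` to the image of one of its powers stays in its semigroup conjugacy class. -/
theorem semigroupConj_mul_of_range_eq (A : Matrix (Fin n) (Fin n) F) (j : ℕ) :
    ∀ P : Matrix (Fin n) (Fin n) F, P * P = P →
      LinearMap.range (mulVecLin P) = LinearMap.range (mulVecLin (A ^ j)) →
      SemigroupConj A (A * P) := by
  induction j with
  | zero =>
    intro P hP hr
    have h1 : P * 1 = 1 := mul_eq_right_of_range_le hP (by rw [hr, pow_zero])
    rw [mul_one] at h1
    subst h1
    exact .single ⟨A, 1, by simp, by simp⟩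
  | succ j ih =>
    intro P hP hr
    obtain ⟨Q, hQ, hQr⟩ := exists_idem_range_eq (LinearMap.range (mulVecLin (A ^ j)))
    refine (ih Q hQ hQr).tail ⟨P, A * Q, ?_, ?_⟩
    · refine (mul_eq_right_of_range_le hP ?_).symm
      rw [hr, mulVecLin_mul, LinearMap.range_comp, hQr, pow_succ', mulVecLin_mul,
        LinearMap.range_comp]
    · rw [mul_assoc, mul_eq_right_of_range_le hQ]
      rw [hQr, hr, pow_succ, mulVecLin_mul]
      exact LinearMap.range_comp_le_range _ _

/-- An intertwiner preserves both the images and the kernels of the `n`-th powers, hence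
intertwines the Fitting idempotents. -/
theorem mul_eq_mul_of_intertwine {A B eA eB V : Matrix (Fin n) (Fin n) F}
    (hA : IsFitting A eA) (hB : IsFitting B eB) (h : V * A = B * V) : eB * V = V * eA := by
  have hn := pow_intertwine h n
  have h1 : eB * (V * eA) = V * eA := by
    refine mul_eq_right_of_range_le hB.idem ?_
    rw [hB.range_eq, mulVecLin_mul, LinearMap.range_comp, hA.range_eq, ← LinearMap.range_comp,
      ← mulVecLin_mul, hn, mulVecLin_mul]
    exact LinearMap.range_comp_le_range _ _
  have h2 : eB * (V * (1 - eA)) = 0 := by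
    refine Matrix.ext_of_mulVec_single fun i => ?_
    have hx : (1 - eA) *ᵥ Pi.single i 1 ∈ LinearMap.ker (mulVecLin eA) := by
      rw [LinearMap.mem_ker, mulVecLin_apply, mulVec_mulVec, mul_sub, hA.idem,
        mul_one, sub_self, zero_mulVec]
    rw [hA.ker_eq, LinearMap.mem_ker, mulVecLin_apply] at hx
    have hy : V *ᵥ ((1 - eA) *ᵥ Pi.single i 1) ∈ LinearMap.ker (mulVecLin eB) := by
      rw [hB.ker_eq, LinearMap.mem_ker, mulVecLin_apply, mulVec_mulVec, ← hn, ← mulVec_mulVec,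
        hx, mulVec_zero]
    rw [LinearMap.mem_ker, mulVecLin_apply] at hy
    rw [← mulVec_mulVec, ← mulVec_mulVec, hy, zero_mulVec]
  rw [mul_sub, mul_sub, mul_one, h1, sub_eq_zero] at h2
  exact h2

/-- Every power of `A` is injective on `Im e`. -/
theorem IsFitting.eq_zero_of_pow_mulVec (hn : 1 ≤ n) {A e : Matrix (Fin n) (Fin n) F}
    (h : IsFitting A e) (k : ℕ) : ∀ x : Fin n → F, e *ᵥ x = x → A ^ k *ᵥ x = 0 → x = 0 := by
  have hc : e * A = A * e := mul_eq_mul_of_intertwine h h rfl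
  induction k with
  | zero => intro x _ h0; simpa using h0
  | succ k ih =>
    intro x hx h0
    have hAx : A *ᵥ x = 0 := by
      refine ih _ ?_ ?_
      · rw [mulVec_mulVec, hc, ← mulVec_mulVec, hx]
      · rw [mulVec_mulVec, ← pow_succ, h0]
    have : x ∈ LinearMap.ker (mulVecLin e) := by
      rw [h.ker_eq, LinearMap.mem_ker, mulVecLin_apply, ← pow_sub_one_mul (by omega : n ≠ 0) A,
        ← mulVec_mulVec, hAx, mulVec_zero]
    rw [LinearMap.mem_ker, mulVecLin_apply, hx] at this
    exact this

/-- A right factor of a power of `A` is injective on `Im e`. -/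
theorem mulVec_injOn_range (hn : 1 ≤ n) {A e U V : Matrix (Fin n) (Fin n) F} (h : IsFitting A e)
    {k : ℕ} (hUV : U * V = A ^ k) (x : Fin n → F) (hx : e *ᵥ x = x) (h0 : V *ᵥ x = 0) : x = 0 := by
  refine h.eq_zero_of_pow_mulVec hn k x hx ?_
  rw [← hUV, ← mulVec_mulVec, h0, mulVec_zero]

/-- The intertwiner `V` embeds `Im eA` in `Im eB`. -/
theorem finrank_range_le (hn : 1 ≤ n) {A B eA eB U V : Matrix (Fin n) (Fin n) F}
    (hA : IsFitting A eA) (hB : IsFitting B eB) {k : ℕ} (hUV : U * V = A ^ k)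
    (hV : V * A = B * V) :
    Module.finrank F (LinearMap.range (mulVecLin eA)) ≤
      Module.finrank F (LinearMap.range (mulVecLin eB)) := by
  have hc := mul_eq_mul_of_intertwine hA hB hV
  have hfix : ∀ x ∈ LinearMap.range (mulVecLin eA), eA *ᵥ x = x := by
    rintro _ ⟨y, rfl⟩
    rw [mulVecLin_apply, mulVec_mulVec, hA.idem]
  have hm : ∀ x ∈ LinearMap.range (mulVecLin eA),
      mulVecLin V x ∈ LinearMap.range (mulVecLin eB) := fun x hx =>
    ⟨V *ᵥ x, by rw [mulVecLin_apply, mulVec_mulVec, hc, ← mulVec_mulVec, hfix x hx]; rfl⟩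
  refine LinearMap.finrank_le_finrank_of_injective (f := (mulVecLin V).restrict hm) ?_
  rw [← LinearMap.ker_eq_bot, LinearMap.ker_eq_bot']
  rintro ⟨x, hx⟩ h0
  exact Subtype.ext (mulVec_injOn_range hn hA hUV x (hfix x hx) (congrArg Subtype.val h0))

/-- An isomorphism from the kernel of `eA` to that of `eB`, extended by zero on `Im eA`; it exists
by rank-nullity because the ranks agree. -/
theorem exists_ker_iso {eA eB : Matrix (Fin n) (Fin n) F} (hA : eA * eA = eA)
    (h : Module.finrank F (LinearMap.range (mulVecLin eA)) =
      Module.finrank F (LinearMap.range (mulVecLin eB))) :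
    ∃ Z : Matrix (Fin n) (Fin n) F, eB * Z = 0 ∧ Z * eA = 0 ∧
      ∀ x, eA *ᵥ x = 0 → Z *ᵥ x = 0 → x = 0 := by
  have h1 := LinearMap.finrank_range_add_finrank_ker (mulVecLin eA)
  have h2 := LinearMap.finrank_range_add_finrank_ker (mulVecLin eB)
  have φ : LinearMap.ker (mulVecLin eA) ≃ₗ[F] LinearMap.ker (mulVecLin eB) :=
    LinearEquiv.ofFinrankEq _ _ (by omega)
  let π : (Fin n → F) →ₗ[F] LinearMap.ker (mulVecLin eA) :=
    (mulVecLin (1 - eA)).codRestrict _ fun x => by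
      rw [LinearMap.mem_ker, mulVecLin_apply, mulVecLin_apply, mulVec_mulVec, mul_sub, hA]
      simp
  let ζ : (Fin n → F) →ₗ[F] (Fin n → F) := Submodule.subtype _ ∘ₗ φ.toLinearMap ∘ₗ π
  have hζ : ∀ x, LinearMap.toMatrix' ζ *ᵥ x = φ (π x) := fun x => by
    rw [LinearMap.toMatrix'_mulVec]; rfl
  refine ⟨LinearMap.toMatrix' ζ, ?_, ?_, ?_⟩
  · refine Matrix.ext_of_mulVec_single fun i => ?_
    rw [← mulVec_mulVec, hζ]
    exact (φ (π (Pi.single i 1))).2.trans (zero_mulVec _).symm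
  · refine Matrix.ext_of_mulVec_single fun i => ?_
    have : π (eA *ᵥ Pi.single i 1) = 0 := Subtype.ext (by
      change (1 - eA) *ᵥ (eA *ᵥ Pi.single i 1) = 0
      rw [mulVec_mulVec, sub_mul, hA, one_mul, sub_self, zero_mulVec])
    rw [← mulVec_mulVec, hζ, zero_mulVec, this, map_zero]
    rfl
  · intro x hx h0
    rw [hζ] at h0
    have hπ : π x = 0 := by simpa using h0
    have : (1 - eA) *ᵥ x = 0 := congrArg Subtype.val hπ
    simpa [sub_mulVec, hx] using this

theorem exists_conj_of_shiftEquiv (hn : 1 ≤ n) {A B eA eB : Matrix (Fin n) (Fin n) F}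
    (hA : IsFitting A eA) (hB : IsFitting B eB) (h : ShiftEquiv A B) :
    ∃ g : Matrix (Fin n) (Fin n) F, IsUnit g ∧ eB * B * eB = g * (eA * A * eA) * g⁻¹ := by
  obtain ⟨k, U, V, hU, hV, hUV, hVU⟩ := h
  have hcV : eB * V = V * eA := mul_eq_mul_of_intertwine hA hB hV
  have hcA : eA * A = A * eA := mul_eq_mul_of_intertwine hA hA rfl
  have hcB : eB * B = B * eB := mul_eq_mul_of_intertwine hB hB rfl
  obtain ⟨Z, hBZ, hZA, hZ⟩ := exists_ker_iso (eB := eB) hA.idem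
    (le_antisymm (finrank_range_le hn hA hB hUV hV) (finrank_range_le hn hB hA hVU hU.symm))
  -- `V` on the image of `eA`, and the isomorphism of kernels on the kernel of `eA`.
  have hg : IsUnit (V * eA + Z) := by
    rw [← Matrix.mulVec_injective_iff_isUnit]
    change Function.Injective (mulVecLin (V * eA + Z))
    rw [← LinearMap.ker_eq_bot, LinearMap.ker_eq_bot']
    intro x hx
    rw [mulVecLin_apply] at hx
    have h1 : V *ᵥ (eA *ᵥ x) = 0 := by
      have := congrArg (eB *ᵥ ·) hx
      simp only [mulVec_mulVec, mulVec_zero] at this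
      rwa [mul_add, hBZ, add_zero, ← mul_assoc, hcV, mul_assoc, hA.idem,
        ← mulVec_mulVec] at this
    have h2 : eA *ᵥ x = 0 :=
      mulVec_injOn_range hn hA hUV _ (by rw [mulVec_mulVec, hA.idem]) h1
    refine hZ x h2 ?_
    rwa [add_mulVec, ← mulVec_mulVec, h1, zero_add] at hx
  refine ⟨V * eA + Z, hg, ?_⟩
  have key : eB * B * eB * (V * eA + Z) = (V * eA + Z) * (eA * A * eA) := by
    calc eB * B * eB * (V * eA + Z) = eB * B * ((eB * V) * eA + eB * Z) := by
          simp only [mul_add, mul_assoc]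
      _ = B * (eB * V) * eA := by
          rw [hBZ, add_zero, hcV, mul_assoc V, hA.idem, hcB, mul_assoc B, ← mul_assoc eB, hcV,
            ← mul_assoc]
      _ = V * (A * eA) * eA := by rw [hcV, ← mul_assoc, ← hV, mul_assoc V]
      _ = V * (eA * eA) * A * eA + (Z * eA) * A * eA := by
          rw [hZA, hA.idem, ← hcA]; simp only [zero_mul, add_zero, mul_assoc]
      _ = (V * eA + Z) * (eA * A * eA) := by simp only [add_mul, mul_assoc]
  rw [← key, mul_assoc _ (V * eA + Z), Matrix.mul_nonsing_inv _ ((Matrix.isUnit_iff_isUnit_det _).1 hg), mul_one]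

theorem semigroupConj_fittingPart {A e : Matrix (Fin n) (Fin n) F} (h : IsFitting A e) :
    SemigroupConj A (e * A * e) := by
  have hc : e * A = A * e := mul_eq_mul_of_intertwine h h rfl
  rw [hc, mul_assoc, h.idem]
  exact semigroupConj_mul_of_range_eq A n e h.idem h.range_eq

end Helpers

/-- Two matrices `A`, `B` are `M(n,F)`-conjugated if and only if `A_s` and `B_s`
are `GL(n,F)`-conjugated, where `X_s = e_X * X * e_X` and `e_X` is the idempotent
projecting onto `Im(X^n)` along `ker(X^n)`. -/
theorem conj_iff_semisimple_parts_glConj {F : Type*} [Field F] {n : ℕ} (hn : 1 ≤ n)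
    (A B eA eB : Matrix (Fin n) (Fin n) F)
    (heA_idem : eA * eA = eA)
    (heA_range : LinearMap.range (Matrix.mulVecLin eA)
      = LinearMap.range (Matrix.mulVecLin (A ^ n)))
    (heA_ker : LinearMap.ker (Matrix.mulVecLin eA)
      = LinearMap.ker (Matrix.mulVecLin (A ^ n)))
    (heB_idem : eB * eB = eB)
    (heB_range : LinearMap.range (Matrix.mulVecLin eB)
      = LinearMap.range (Matrix.mulVecLin (B ^ n)))
    (heB_ker : LinearMap.ker (Matrix.mulVecLin eB)
      = LinearMap.ker (Matrix.mulVecLin (B ^ n))) :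
    SemigroupConj A B ↔
      ∃ g : Matrix (Fin n) (Fin n) F, IsUnit g ∧
        eB * B * eB = g * (eA * A * eA) * g⁻¹ := by
  have hA : IsFitting A eA := ⟨heA_idem, heA_range, heA_ker⟩
  have hB : IsFitting B eB := ⟨heB_idem, heB_range, heB_ker⟩
  constructor
  · exact fun h => exists_conj_of_shiftEquiv hn hA hB (.of_semigroupConj h)
  · rintro ⟨g, hg, h⟩
    have hs : PrimConj (eA * A * eA) (eB * B * eB) := by
      refine ⟨(eA * A * eA) * g⁻¹, g, ?_, by rw [h, mul_assoc]⟩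
      rw [mul_assoc _ g⁻¹, Matrix.nonsing_inv_mul _ ((Matrix.isUnit_iff_isUnit_det _).1 hg), mul_one]
    exact ((semigroupConj_fittingPart hA).tail hs).trans (semigroupConj_fittingPart hB).symm
end

section
/- Let F be a field, n ≥ 1, and A ∈ M(n,F). Then A is M(n,F)-conjugated to A_s. In particular, every nilpotent matrix A ∈ M(n,F) is M(n,F)-conjugated to the zero matrix. -/
/-- `p` is a projection onto the column space of `M`, encoded by equations: `p` fixes the columns
of `M`, and its own columns are combinations of those of `M`. Idempotence of `p` follows. -/
def IsProjOnto {F : Type*} [Field F] {n : ℕ} (p M : Matrix (Fin n) (Fin n) F) : Prop :=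
  p * M = M ∧ ∃ Z, p = M * Z

/-- Square matrices over a field form a von Neumann regular semigroup. -/
theorem exists_mul_mul_eq {F : Type*} [Field F] {n : ℕ} (M : Matrix (Fin n) (Fin n) F) :
    ∃ Z, M * Z * M = M := by
  set f := Matrix.toLin' M with hf
  -- A section of `f` over its range, extended to the whole space.
  obtain ⟨g, hg⟩ := f.rangeRestrict.exists_rightInverse_of_surjective f.range_rangeRestrict
  obtain ⟨g', hg'⟩ := g.exists_extend
  refine ⟨LinearMap.toMatrix' g', ?_⟩
  apply Matrix.toLin'.injective
  rw [Matrix.toLin'_mul, Matrix.toLin'_mul, Matrix.toLin'_toMatrix', ← hf]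
  refine LinearMap.ext fun v => ?_
  have h1 : g' (f v) = g (f.rangeRestrict v) := LinearMap.congr_fun hg' (f.rangeRestrict v)
  have h2 := congrArg Subtype.val (LinearMap.congr_fun hg (f.rangeRestrict v))
  simpa [h1] using h2

theorem exists_isProjOnto {F : Type*} [Field F] {n : ℕ} (M : Matrix (Fin n) (Fin n) F) :
    ∃ p, IsProjOnto p M := by
  obtain ⟨Z, hZ⟩ := exists_mul_mul_eq M
  exact ⟨M * Z, hZ, Z, rfl⟩

theorem mul_eq_of_range_le {F : Type*} [Field F] {n : ℕ} {D B C : Matrix (Fin n) (Fin n) F}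
    (hDC : D * C = C)
    (h : LinearMap.range (Matrix.mulVecLin B) ≤ LinearMap.range (Matrix.mulVecLin C)) :
    D * B = B := by
  refine Matrix.ext_of_mulVec_single fun i => ?_
  obtain ⟨w, hw⟩ := h ⟨Pi.single i 1, rfl⟩
  simp only [Matrix.mulVecLin_apply] at hw
  rw [← Matrix.mulVec_mulVec, ← hw, Matrix.mulVec_mulVec, hDC]

theorem isProjOnto_of_range_eq {F : Type*} [Field F] {n : ℕ} {e M : Matrix (Fin n) (Fin n) F}
    (he : e * e = e)
    (h : LinearMap.range (Matrix.mulVecLin e) = LinearMap.range (Matrix.mulVecLin M)) :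
    IsProjOnto e M := by
  obtain ⟨Z, hZ⟩ := exists_mul_mul_eq M
  refine ⟨mul_eq_of_range_le he h.ge, Z * e, ?_⟩
  rw [← mul_assoc]
  exact (mul_eq_of_range_le hZ h.le).symm

theorem primConj_step {F : Type*} [Field F] {n : ℕ} {A p q : Matrix (Fin n) (Fin n) F} {k : ℕ}
    (hp : IsProjOnto p (A ^ k)) (hq : IsProjOnto q (A ^ (k + 1))) :
    PrimConj (A * p) (A * q) := by
  obtain ⟨hp1, Z, hZ⟩ := hp
  obtain ⟨hq1, W, hW⟩ := hq
  have hqAp : q * (A * p) = A * p := by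
    rw [hZ, ← mul_assoc A, ← pow_succ', ← mul_assoc, hq1]
  have hpq : p * q = q := by
    rw [hW, pow_succ, ← mul_assoc, ← mul_assoc, hp1]
  exact ⟨q, A * p, hqAp.symm, by rw [mul_assoc, hpq]⟩

theorem semigroupConj_mul_proj {F : Type*} [Field F] {n : ℕ} (A : Matrix (Fin n) (Fin n) F)
    (k : ℕ) : ∀ p, IsProjOnto p (A ^ k) → SemigroupConj A (A * p) := by
  induction k with
  | zero =>
    intro p hp
    have hp1 : p = 1 := by simpa using hp.1
    exact Relation.TransGen.single ⟨A, 1, by simp, by simp [hp1]⟩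
  | succ k ih =>
    intro q hq
    obtain ⟨p, hp⟩ := exists_isProjOnto (A ^ k)
    exact (ih p hp).tail (primConj_step hp hq)

/-- Every matrix `A` is `M(n,F)`-conjugated to `A_s = e_A * A * e_A`, where `e_A` is
the idempotent projecting onto `Im(A^n)` along `ker(A^n)`.  In particular, every
nilpotent matrix is `M(n,F)`-conjugated to the zero matrix. -/
theorem conj_to_semisimple_part {F : Type*} [Field F] {n : ℕ} (hn : 1 ≤ n)
    (A eA : Matrix (Fin n) (Fin n) F)
    (heA_idem : eA * eA = eA)
    (heA_range : LinearMap.range (Matrix.mulVecLin eA)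
      = LinearMap.range (Matrix.mulVecLin (A ^ n)))
    (heA_ker : LinearMap.ker (Matrix.mulVecLin eA)
      = LinearMap.ker (Matrix.mulVecLin (A ^ n))) :
    SemigroupConj A (eA * A * eA) ∧ (IsNilpotent A → SemigroupConj A 0) := by
  have hproj := isProjOnto_of_range_eq heA_idem heA_range
  have hconj := semigroupConj_mul_proj A n eA hproj
  obtain ⟨hfix, Z, hZ⟩ := hproj
  have hstable : eA * A * eA = A * eA := by
    rw [mul_assoc]
    nth_rewrite 2 3 [hZ]
    rw [← mul_assoc A, ← pow_succ', pow_succ, ← mul_assoc, ← mul_assoc, hfix]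
  refine ⟨hstable ▸ hconj, fun hA => ?_⟩
  have hAn : A ^ n = 0 := by
    have h := sub_eq_zero.1 (Matrix.isNilpotent_charpoly_sub_pow_of_isNilpotent hA).eq_zero
    simpa [h] using Matrix.aeval_self_charpoly A
  have he : eA = 0 := by rw [hZ, hAn, zero_mul]
  simpa [he] using hconj
end

section
/- Let F be a field, n ≥ 1, k ≥ 2, and let T be a nilpotent subsemigroup of M(n,F) of nilpotency degree k which is maximal, with respect to inclusion, among all nilpotent subsemigroups of M(n,F) of nilpotency degree k. Then T is closed under addition and under multiplication by scalars from F; that is, T is a subalgebra of M(n,F). -/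
/-! The linear span of `T` is again a subsemigroup. By multilinearity a product of `k` elements of
the span is a linear combination of products of `k` elements of `T` (`list_prod_mem_span`), hence
zero, so the span has the same nilpotency degree as `T`. Maximality then makes `T` equal to its
span, which is a linear subspace. -/

/-- A subset `S` of `M(n,F)` is nilpotent of nilpotency degree `k` if every product of
`k` elements of `S` is zero, while some product of `k-1` elements of `S` is nonzero. -/
def NilpotentOfDegree {F : Type*} [Field F] {n : ℕ}
    (S : Set (Matrix (Fin n) (Fin n) F)) (k : ℕ) : Prop :=
  (∀ l : List (Matrix (Fin n) (Fin n) F), l.length = k → (∀ a ∈ l, a ∈ S) → l.prod = 0) ∧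
  (∃ l : List (Matrix (Fin n) (Fin n) F), l.length = k - 1 ∧ (∀ a ∈ l, a ∈ S) ∧ l.prod ≠ 0)

open scoped Pointwise in
/-- Multilinearity of products: a product of elements of the span of `S` is a linear combination of
products of equally many elements of `S`. -/
theorem list_prod_mem_span {F A : Type*} [Field F] [Ring A] [Algebra F A] (S : Set A)
    (l : List A) (hl : ∀ a ∈ l, a ∈ Submodule.span F S) :
    l.prod ∈ Submodule.span F
      {x | ∃ m : List A, m.length = l.length ∧ (∀ a ∈ m, a ∈ S) ∧ m.prod = x} := by
  induction l with
  | nil => exact Submodule.subset_span ⟨[], by simp⟩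
  | cons a l ih =>
    have h1 := hl a (by simp)
    have h2 := ih fun b hb => hl b (by simp [hb])
    have h3 := Submodule.mul_mem_mul h1 h2
    rw [Submodule.span_mul_span] at h3
    rw [List.prod_cons]
    refine Submodule.span_mono ?_ h3
    rintro _ ⟨x, hx, _, ⟨m, hm, hmS, rfl⟩, rfl⟩
    exact ⟨x :: m, by simp [hm], by simpa using ⟨hx, hmS⟩, by simp⟩

/-- The span of a subsemigroup of an algebra, as a subsemigroup. -/
def spanSubsemigroup (F : Type*) {A : Type*} [Field F] [Ring A] [Algebra F A]
    (T : Subsemigroup A) : Subsemigroup A where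
  carrier := Submodule.span F (T : Set A)
  mul_mem' {a b} ha hb := by
    have h := Submodule.mul_mem_mul ha hb
    rw [Submodule.span_mul_span] at h
    refine Submodule.span_mono ?_ h
    rintro _ ⟨x, hx, y, hy, rfl⟩
    exact T.mul_mem hx hy

/-- A maximal nilpotent subsemigroup of `M(n,F)` of a fixed nilpotency degree `k ≥ 2`
is closed under addition and under multiplication by scalars, i.e. it is a subalgebra. -/
theorem maximal_nilpotent_subsemigroup_is_subalgebra {F : Type*} [Field F] {n k : ℕ}
    (hn : 1 ≤ n) (hk : 2 ≤ k) (T : Subsemigroup (Matrix (Fin n) (Fin n) F))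
    (hT : NilpotentOfDegree (T : Set (Matrix (Fin n) (Fin n) F)) k)
    (hmax : ∀ T' : Subsemigroup (Matrix (Fin n) (Fin n) F),
      NilpotentOfDegree (T' : Set (Matrix (Fin n) (Fin n) F)) k → T ≤ T' → T = T') :
    (∀ a ∈ T, ∀ b ∈ T, a + b ∈ T) ∧ (∀ c : F, ∀ a ∈ T, c • a ∈ T) := by
  have hle : T ≤ spanSubsemigroup F T := fun x hx => Submodule.subset_span hx
  have hnil : NilpotentOfDegree (spanSubsemigroup F T : Set (Matrix (Fin n) (Fin n) F)) k := by
    obtain ⟨h0, l, hlen, hl, hne⟩ := hT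
    refine ⟨fun l hlen hl => ?_, l, hlen, fun a ha => hle (hl a ha), hne⟩
    have h := list_prod_mem_span (F := F) (T : Set (Matrix (Fin n) (Fin n) F)) l hl
    rw [← Submodule.mem_bot F]
    refine Submodule.span_le.2 ?_ h
    rintro _ ⟨m, hm, hmT, rfl⟩
    exact h0 m (hm.trans hlen) hmT
  have heq := hmax _ hnil hle
  have hmem : ∀ x, x ∈ T ↔ x ∈ Submodule.span F (T : Set (Matrix (Fin n) (Fin n) F)) :=
    fun x => ⟨fun hx => hle hx, fun hx => heq.symm ▸ hx⟩
  exact ⟨fun a ha b hb => (hmem _).2 (add_mem ((hmem a).1 ha) ((hmem b).1 hb)),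
    fun c a ha => (hmem _).2 (Submodule.smul_mem _ c ((hmem a).1 ha))⟩
end

section
/- Let F be a field and let 𝓕 be a flag of length k in F^n. Then φ(𝓕) is a nilpotent subsemigroup of M(n,F) of nilpotency degree exactly k: every product of k elements of φ(𝓕) equals 0, and there exists a ∈ φ(𝓕) with a^{k−1} ≠ 0. -/
/-!
Re-index the flag by `ℕ`, as `W i = V (min i k)`. A product of `m` elements of `φ(𝓕)` lowers the
index of each `W (j + m)` by `m` (`list_prod_lowers`), so a product of `k` elements maps
`W k = ⊤` into `W 0 = ⊥`.

For sharpness, pick `v i ∈ W (i + 1)` outside `W i` and a functional `f i` vanishing on `W i` with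
`f i (v i) = 1`. The operator `T x = ∑ i < k - 1, f (i + 1) x • v i` lowers the index by one, and
on `W (i + 2)` it satisfies `f i ∘ T = f (i + 1)`. Hence `f 0 (T ^ (k - 1) (v (k - 1))) = 1`
(`exists_lowering_operator`).
-/

/-- A flag of length `k` in `F^n`: a chain of subspaces `0 = V_0 ⊊ V_1 ⊊ ⋯ ⊊ V_k = F^n`. -/
def IsFlag {F : Type*} [Field F] {n k : ℕ} (V : Fin (k + 1) → Submodule F (Fin n → F)) : Prop :=
  V 0 = ⊥ ∧ V (Fin.last k) = ⊤ ∧ StrictMono V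

/-- `φ(𝓕)`: the set of all matrices `A` with `A(V_i) ⊆ V_{i-1}` for all `i = 1, …, k`. -/
def phiFlag {F : Type*} [Field F] {n k : ℕ} (V : Fin (k + 1) → Submodule F (Fin n → F)) :
    Set (Matrix (Fin n) (Fin n) F) :=
  {A | ∀ i : Fin k, ∀ v ∈ V i.succ, A.mulVec v ∈ V i.castSucc}

theorem list_prod_lowers {F : Type*} [Field F] {n k : ℕ} (W : ℕ → Submodule F (Fin n → F))
    (l : List (Matrix (Fin n) (Fin n) F))
    (hl : ∀ a ∈ l, ∀ j < k, ∀ x ∈ W (j + 1), a.mulVec x ∈ W j) (j : ℕ) (hj : j + l.length ≤ k)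
    (x : Fin n → F) (hx : x ∈ W (j + l.length)) : l.prod.mulVec x ∈ W j := by
  induction l generalizing j with
  | nil => simpa using hx
  | cons a l ih =>
    rw [List.length_cons] at hj hx
    rw [List.prod_cons, ← Matrix.mulVec_mulVec]
    refine hl a (by simp) j (by omega) _
      (ih (fun b hb => hl b (by simp [hb])) (j + 1) (by omega) ?_)
    rwa [add_right_comm, add_assoc]

theorem exists_dual_eq_one {F E : Type*} [Field F] [AddCommGroup E] [Module F E]
    {P Q : Submodule F E} (h : P < Q) :
    ∃ (v : E) (f : E →ₗ[F] F), v ∈ Q ∧ f v = 1 ∧ ∀ x ∈ P, f x = 0 := by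
  obtain ⟨v, hvQ, hvP⟩ := SetLike.exists_of_lt h
  obtain ⟨f, hf, hle⟩ := Submodule.exists_le_ker_of_notMem hvP
  exact ⟨v, (f v)⁻¹ • f, hvQ, by simp [hf], fun x hx => by
    simp [LinearMap.mem_ker.mp (hle hx)]⟩

/-- A chain with `d + 1` strict steps admits an operator lowering it by one step whose `d`-th power
is nonzero. -/
theorem exists_lowering_operator {F E : Type*} [Field F] [AddCommGroup E] [Module F E] (d : ℕ)
    (W : ℕ → Submodule F E) (hmono : Monotone W) (hlt : ∀ i < d + 1, W i < W (i + 1)) :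
    ∃ T : E →ₗ[F] E, (∀ j < d + 1, ∀ x ∈ W (j + 1), T x ∈ W j) ∧ T ^ d ≠ 0 := by
  have H : ∀ i, ∃ (v : E) (f : E →ₗ[F] F), i < d + 1 →
      v ∈ W (i + 1) ∧ f v = 1 ∧ ∀ x ∈ W i, f x = 0 := by
    intro i
    by_cases hi : i < d + 1
    · obtain ⟨v, f, h⟩ := exists_dual_eq_one (hlt i hi)
      exact ⟨v, f, fun _ => h⟩
    · exact ⟨0, 0, fun h => absurd h hi⟩
  choose v f hvf using H
  let T : E →ₗ[F] E := ∑ i ∈ Finset.range d, (f (i + 1)).smulRight (v i)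
  have hT : ∀ x, T x = ∑ i ∈ Finset.range d, f (i + 1) x • v i := fun x => by
    simp [T, LinearMap.sum_apply]
  have hlow : ∀ j < d + 1, ∀ x ∈ W (j + 1), T x ∈ W j := by
    intro j _ x hx
    rw [hT]
    refine Submodule.sum_mem _ fun i hi => ?_
    rw [Finset.mem_range] at hi
    by_cases hij : i + 1 ≤ j
    · exact Submodule.smul_mem _ _ (hmono hij (hvf i (by omega)).1)
    · rw [(hvf (i + 1) (by omega)).2.2 x (hmono (by omega) hx), zero_smul]
      exact zero_mem _
  have hshift : ∀ i < d, ∀ x ∈ W (i + 2), f i (T x) = f (i + 1) x := by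
    intro i hi x hx
    rw [hT, map_sum, Finset.sum_eq_single i]
    · rw [map_smul, (hvf i (by omega)).2.1, smul_eq_mul, mul_one]
    · intro l hl hne
      rw [Finset.mem_range] at hl
      rw [map_smul]
      rcases lt_or_gt_of_ne hne with h | h
      · rw [(hvf i (by omega)).2.2 _ (hmono (by omega) (hvf l (by omega)).1), smul_zero]
      · rw [(hvf (l + 1) (by omega)).2.2 x (hmono (by omega) hx), zero_smul]
    · intro h
      exact absurd (Finset.mem_range.mpr hi) h
  have hiter : ∀ m i, m + i = d → (T ^ m) (v d) ∈ W (i + 1) ∧ f i ((T ^ m) (v d)) = 1 := by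
    intro m
    induction m with
    | zero =>
      intro i hi
      obtain rfl : i = d := by omega
      simpa using ⟨(hvf i (by omega)).1, (hvf i (by omega)).2.1⟩
    | succ m ih =>
      intro i hi
      obtain ⟨h1, h2⟩ := ih (i + 1) (by omega)
      rw [pow_succ', Module.End.mul_apply]
      exact ⟨hlow (i + 1) (by omega) _ h1, (hshift i (by omega) _ h1).trans h2⟩
  refine ⟨T, hlow, fun h0 => ?_⟩
  have := (hiter d 0 (by omega)).2
  simp [h0] at this

/-- For a flag `𝓕` of length `k` in `F^n`, the semigroup `φ(𝓕)` is nilpotent of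
nilpotency degree exactly `k`: every product of `k` of its elements is zero, and
some element `a ∈ φ(𝓕)` satisfies `a^(k-1) ≠ 0`. -/
theorem phiFlag_nilpotent_degree {F : Type*} [Field F] {n k : ℕ} (hn : 0 < n)
    (V : Fin (k + 1) → Submodule F (Fin n → F)) (hV : IsFlag V) :
    (∀ l : List (Matrix (Fin n) (Fin n) F), l.length = k →
      (∀ a ∈ l, a ∈ phiFlag V) → l.prod = 0) ∧
    (∃ a ∈ phiFlag V, a ^ (k - 1) ≠ 0) := by
  obtain ⟨h0, h1, hs⟩ := hV
  let W : ℕ → Submodule F (Fin n → F) := fun i => V ⟨min i k, by omega⟩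
  have hWV : ∀ i (hi : i < k + 1), W i = V ⟨i, hi⟩ := fun i hi => by
    simp only [W, min_eq_left (Nat.lt_succ_iff.mp hi)]
  have hphi : ∀ a, a ∈ phiFlag V ↔ ∀ j < k, ∀ x ∈ W (j + 1), a.mulVec x ∈ W j := by
    intro a
    constructor
    · intro ha j hj x hx
      rw [hWV _ (by omega)] at hx ⊢
      exact ha ⟨j, hj⟩ x hx
    · intro ha i x hx
      have := ha i i.2 x
      rw [hWV _ (by omega), hWV _ (by omega)] at this
      exact this hx
  have hW0 : W 0 = ⊥ := (hWV 0 (by omega)).trans h0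
  have hWk : W k = ⊤ := (hWV k (by omega)).trans h1
  constructor
  · intro l hl ha
    have key := list_prod_lowers (k := k) W l (fun a h => (hphi a).mp (ha a h)) 0 (by omega)
    rw [zero_add, hl, hWk, hW0] at key
    refine Matrix.ext_of_mulVec_single fun i => ?_
    rw [Matrix.zero_mulVec]
    exact (Submodule.mem_bot F).mp (key _ Submodule.mem_top)
  · -- A flag of length `0` would give `⊥ = ⊤` in `F ^ n`, which `0 < n` excludes.
    obtain _ | d := k
    · have : Nonempty (Fin n) := ⟨⟨0, hn⟩⟩
      exact absurd (hW0.symm.trans hWk) bot_ne_top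
    · have hmono : Monotone W := fun i j hij =>
        hs.monotone (Fin.mk_le_mk.mpr (min_le_min_right _ hij))
      have hlt : ∀ i < d + 1, W i < W (i + 1) := fun i hi => by
        rw [hWV i (by omega), hWV (i + 1) (by omega)]
        exact hs (Fin.mk_lt_mk.mpr (Nat.lt_succ_self i))
      obtain ⟨T, hT, hne⟩ := exists_lowering_operator d W hmono hlt
      refine ⟨LinearMap.toMatrix' T, (hphi _).mpr fun j hj x hx => ?_, fun h => hne ?_⟩
      · rw [LinearMap.toMatrix'_mulVec]
        exact hT j hj x hx
      · have h' := congrArg Matrix.toLin' h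
        rwa [Nat.add_sub_cancel, Matrix.toLin'_pow, Matrix.toLin'_toMatrix', map_zero] at h'
end

section
/- Let F be a field and let S be a nilpotent subsemigroup of M(n,F) of nilpotency degree k. For 1 ≤ i ≤ k−1 let W_i be the linear span in F^n of the set {(a_1a_2⋯a_i)·v : a_1,…,a_i ∈ S, v ∈ F^n}, and set W_0 = F^n and W_k = 0. Then 0 = W_k ⊊ W_{k−1} ⊊ ⋯ ⊊ W_1 ⊊ W_0 = F^n; in particular these subspaces form a flag of length k in F^n. -/
/-- `W_i`: the linear span in `F^n` of `S^i(F^n) = {(a_1⋯a_i)·v : a_1,…,a_i ∈ S, v ∈ F^n}`.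
For `i = 0` this is all of `F^n`, and for `i = k` (the nilpotency degree) it is `0`. -/
def spanOfPowers {F : Type*} [Field F] {n : ℕ}
    (S : Set (Matrix (Fin n) (Fin n) F)) (i : ℕ) : Submodule F (Fin n → F) :=
  Submodule.span F {x | ∃ l : List (Matrix (Fin n) (Fin n) F),
    l.length = i ∧ (∀ a ∈ l, a ∈ S) ∧ ∃ v : Fin n → F, x = l.prod.mulVec v}

theorem spanOfPowers_succ_le {F : Type*} [Field F] {n : ℕ}
    (S : Set (Matrix (Fin n) (Fin n) F)) (i : ℕ) :
    spanOfPowers S (i + 1) ≤ spanOfPowers S i := by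
  refine Submodule.span_le.2 ?_
  rintro x ⟨l, hl, hS, v, rfl⟩
  obtain rfl | ⟨l', a, rfl⟩ := List.eq_nil_or_concat l
  · simp at hl
  · refine Submodule.subset_span ⟨l', by simpa using hl, fun b hb => hS b (by simp [hb]),
      a.mulVec v, ?_⟩
    simp [Matrix.mulVec_mulVec]

theorem mulVec_mem_spanOfPowers_succ {F : Type*} [Field F] {n : ℕ}
    {S : Set (Matrix (Fin n) (Fin n) F)} {i : ℕ} {a : Matrix (Fin n) (Fin n) F} (ha : a ∈ S)
    {x : Fin n → F} (hx : x ∈ spanOfPowers S i) : a.mulVec x ∈ spanOfPowers S (i + 1) := by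
  have h : spanOfPowers S i ≤ (spanOfPowers S (i + 1)).comap a.mulVecLin := by
    refine Submodule.span_le.2 ?_
    rintro y ⟨l, hl, hS, v, rfl⟩
    refine Submodule.subset_span ⟨a :: l, by simp [hl], ?_, v, ?_⟩
    · simpa [ha] using hS
    · simp [Matrix.mulVec_mulVec]
  exact h hx

/-- Once the descending chain stalls at one step, it stalls at the next one, because
`W (i + 1)` is generated by the images of `W i` under `S`. -/
theorem spanOfPowers_stall {F : Type*} [Field F] {n : ℕ}
    {S : Set (Matrix (Fin n) (Fin n) F)} {i : ℕ}
    (h : spanOfPowers S i ≤ spanOfPowers S (i + 1)) :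
    spanOfPowers S (i + 1) ≤ spanOfPowers S (i + 2) := by
  refine Submodule.span_le.2 ?_
  rintro x ⟨l, hl, hS, v, rfl⟩
  cases l with
  | nil => simp at hl
  | cons a l =>
    have hv : l.prod.mulVec v ∈ spanOfPowers S i :=
      Submodule.subset_span ⟨l, by simpa using hl, fun b hb => hS b (by simp [hb]), v, rfl⟩
    have := mulVec_mem_spanOfPowers_succ (hS a (by simp)) (h hv)
    simpa [Matrix.mulVec_mulVec] using this

theorem spanOfPowers_le_of_stall {F : Type*} [Field F] {n : ℕ}
    {S : Set (Matrix (Fin n) (Fin n) F)} {i : ℕ}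
    (h : spanOfPowers S i ≤ spanOfPowers S (i + 1)) {j : ℕ} (hij : i ≤ j) :
    spanOfPowers S i ≤ spanOfPowers S j := by
  have key : ∀ j, i ≤ j → spanOfPowers S j ≤ spanOfPowers S (j + 1) := fun j hj =>
    Nat.le_induction h (fun _ _ => spanOfPowers_stall) j hj
  exact Nat.le_induction le_rfl (fun j hj ih => ih.trans (key j hj)) j hij

/-- If `S` is a nilpotent subsemigroup of `M(n,F)` of nilpotency degree `k`, then the
subspaces `W_i = ⟨S^i(F^n)⟩` form a flag `0 = W_k ⊊ W_{k-1} ⊊ ⋯ ⊊ W_1 ⊊ W_0 = F^n`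
of length `k` in `F^n`. -/
theorem spanOfPowers_flag {F : Type*} [Field F] {n k : ℕ}
    (S : Subsemigroup (Matrix (Fin n) (Fin n) F))
    (hS : NilpotentOfDegree (S : Set (Matrix (Fin n) (Fin n) F)) k) :
    spanOfPowers (S : Set (Matrix (Fin n) (Fin n) F)) k = ⊥ ∧
    spanOfPowers (S : Set (Matrix (Fin n) (Fin n) F)) 0 = ⊤ ∧
    (∀ i < k, spanOfPowers (S : Set (Matrix (Fin n) (Fin n) F)) (i + 1)
      < spanOfPowers (S : Set (Matrix (Fin n) (Fin n) F)) i) := by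
  have hbot : spanOfPowers (S : Set (Matrix (Fin n) (Fin n) F)) k = ⊥ := by
    refine (Submodule.span_eq_bot).2 ?_
    rintro x ⟨l, hl, hS', v, rfl⟩
    rw [hS.1 l hl hS', Matrix.zero_mulVec]
  refine ⟨hbot, ?_, fun i hi => lt_of_le_not_ge (spanOfPowers_succ_le _ i) fun hle => ?_⟩
  · exact eq_top_iff.2 fun v _ => Submodule.subset_span ⟨[], rfl, by simp, v, by simp⟩
  · obtain ⟨l, hl, hS', hne⟩ := hS.2
    have hanti : spanOfPowers (S : Set (Matrix (Fin n) (Fin n) F)) (k - 1) ≤ spanOfPowers S i :=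
      antitone_nat_of_succ_le (spanOfPowers_succ_le _) (by omega)
    apply hne
    apply Matrix.mulVec_injective
    funext v
    have hv : l.prod.mulVec v ∈ spanOfPowers (S : Set (Matrix (Fin n) (Fin n) F)) k :=
      spanOfPowers_le_of_stall hle hi.le
        (hanti (Submodule.subset_span ⟨l, hl, hS', v, rfl⟩))
    rw [hbot, Submodule.mem_bot] at hv
    rw [hv, Matrix.zero_mulVec]
end

section
/- Let F be a field and let S be a nonempty subsemigroup of M(n,F). Then S is nilpotent (i.e., there exists k ≥ 1 such that a_1a_2⋯a_k = 0 for all a_1,…,a_k ∈ S) if and only if every element of S is a nilpotent matrix. -/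
/-!
One direction is immediate: apply the vanishing of length-`k` products to `A, A, …, A`.

For the other, a semigroup `S` acting by nilpotent operators on a finite-dimensional space `V` is
treated by induction on `dim V`. If some element acts as a nonzero operator, choose `a` acting with
the smallest nonzero rank. If `c * a` acts as a nonzero operator with image inside that of `a`,
minimality makes the two images equal, so `c` maps `im a` onto itself; this is impossible for a
nilpotent `c` (`levitzki_mul_eq_zero`). Taking `c = a` and `c = a * b` gives `a * a = 0` and
`a * b * a = 0` on `V` for every `b ∈ S`. Hence `W = {w | a w = 0 and a b w = 0 for all b ∈ S}` is
an `S`-invariant subspace which contains `im a ≠ 0` and lies in `ker a ≠ V`. The induction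
hypothesis applies to `W` and to `V / W`, and the two lengths add up.
-/

theorem eq_bot_of_map_eq_of_isNilpotent {F V : Type*} [Field F] [AddCommGroup V] [Module F V]
    {C : Module.End F V} (hC : IsNilpotent C) {R : Submodule F V} (h : R.map C = R) : R = ⊥ := by
  obtain ⟨m, hm⟩ := hC
  have key : ∀ m : ℕ, R.map (C ^ m) = R := by
    intro m
    induction m with
    | zero => simp [Module.End.one_eq_id]
    | succ m ih => rw [pow_succ, Module.End.mul_eq_comp, Submodule.map_comp, h, ih]
  have := key m
  rw [hm, Submodule.map_zero] at this
  exact this.symm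

/-- If `a` acts with minimal nonzero rank and the image of `c * a` lies in that of `a`, then
`c * a` acts as zero. -/
theorem levitzki_mul_eq_zero {F S V : Type*} [Field F] [Semigroup S] [AddCommGroup V] [Module F V]
    [FiniteDimensional F V] (ρ : S →ₙ* Module.End F V) (hρ : ∀ s, IsNilpotent (ρ s))
    {a : S} (ha : ρ a ≠ 0)
    (hmin : ∀ s, ρ s ≠ 0 → Module.finrank F (ρ a).range ≤ Module.finrank F (ρ s).range)
    (c : S) (hc : (ρ (c * a)).range ≤ (ρ a).range) : ρ (c * a) = 0 := by
  by_contra hne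
  have heq := Submodule.eq_of_le_of_finrank_le hc (hmin _ hne)
  rw [map_mul, Module.End.mul_eq_comp, LinearMap.range_comp] at heq
  exact ha (LinearMap.range_eq_bot.mp (eq_bot_of_map_eq_of_isNilpotent (hρ c) heq))

/-- Levitzki's theorem for a semigroup acting by nilpotent operators. The product of the operators
along a list is expressed as the successive action on a vector, which passes directly to invariant
subspaces and quotients. -/
theorem levitzki_action {F S : Type*} [Field F] [Semigroup S] (d : ℕ) :
    ∀ (V : Type*) [AddCommGroup V] [Module F V] [FiniteDimensional F V],
      Module.finrank F V = d → ∀ ρ : S →ₙ* Module.End F V, (∀ s, IsNilpotent (ρ s)) →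
      ∃ k : ℕ, ∀ l : List S, l.length = k → ∀ v : V, l.foldr (fun s w => ρ s w) v = 0 := by
  induction d using Nat.strong_induction_on with
  | _ d ih =>
  intro V _ _ _ hd ρ hρ
  by_cases hz : ∀ s, ρ s = 0
  · refine ⟨1, fun l hl v => ?_⟩
    obtain ⟨s, rfl⟩ := List.length_eq_one_iff.mp hl
    simp [hz]
  push Not at hz
  obtain ⟨a, ha, hmin⟩ := (measure fun s => Module.finrank F (ρ s).range).wf.has_min
    {s | ρ s ≠ 0} hz
  replace hmin : ∀ s, ρ s ≠ 0 → Module.finrank F (ρ a).range ≤ Module.finrank F (ρ s).range :=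
    fun s hs => not_lt.mp (hmin s hs)
  have haa : ρ (a * a) = 0 := by
    refine levitzki_mul_eq_zero ρ hρ ha hmin a ?_
    rw [map_mul]
    exact LinearMap.range_comp_le_range _ _
  have haba : ∀ b, ρ (a * b * a) = 0 := by
    intro b
    refine levitzki_mul_eq_zero ρ hρ ha hmin (a * b) ?_
    rw [mul_assoc, map_mul]
    exact LinearMap.range_comp_le_range _ _
  let W : Submodule F V := (ρ a).ker ⊓ ⨅ b, (ρ (a * b)).ker
  have memW : ∀ w, w ∈ W ↔ ρ a w = 0 ∧ ∀ b, ρ (a * b) w = 0 := by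
    intro w
    simp [W, Submodule.mem_iInf]
  have hinv : ∀ s, ∀ w ∈ W, ρ s w ∈ W := by
    intro s w hw
    rw [memW] at hw ⊢
    refine ⟨?_, fun b => ?_⟩
    · rw [← Module.End.mul_apply, ← map_mul]; exact hw.2 s
    · rw [← Module.End.mul_apply, ← map_mul, mul_assoc]; exact hw.2 _
  have hWtop : W ≠ ⊤ := by
    intro h
    apply ha
    ext v
    exact ((memW v).mp (h ▸ Submodule.mem_top)).1
  have hWbot : W ≠ ⊥ := by
    intro h
    apply ha
    ext v
    have : ρ a v ∈ W := by
      rw [memW]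
      refine ⟨?_, fun b => ?_⟩
      · rw [← Module.End.mul_apply, ← map_mul, haa]; rfl
      · rw [← Module.End.mul_apply, ← map_mul, haba]; rfl
    rw [h] at this
    simpa using this
  have hlt : Module.finrank F W < d := hd ▸ Submodule.finrank_lt hWtop
  have hltQ : Module.finrank F (V ⧸ W) < d := by
    have h1 := Submodule.finrank_quotient_add_finrank W
    have h2 : 0 < Module.finrank F W :=
      Nat.pos_of_ne_zero fun h => hWbot (Submodule.finrank_eq_zero.mp h)
    omega
  let ρW : S →ₙ* Module.End F W :=
    { toFun := fun s => (ρ s).restrict (hinv s)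
      map_mul' := fun s t => by ext w; simp [LinearMap.restrict_apply] }
  let ρQ : S →ₙ* Module.End F (V ⧸ W) :=
    { toFun := fun s => W.mapQ W (ρ s) (hinv s)
      map_mul' := fun s t => by ext v; simp }
  have hρW : ∀ s, IsNilpotent (ρW s) := fun s => by
    obtain ⟨m, hm⟩ := hρ s
    refine ⟨m, ?_⟩
    change ((ρ s).restrict (hinv s)) ^ m = 0
    rw [Module.End.pow_restrict]
    ext w
    simp [LinearMap.restrict_apply, hm]
  have hρQ : ∀ s, IsNilpotent (ρQ s) := fun s => by
    obtain ⟨m, hm⟩ := hρ s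
    refine ⟨m, ?_⟩
    change (W.mapQ W (ρ s) (hinv s)) ^ m = 0
    rw [← Submodule.mapQ_pow]
    ext v
    simp [hm]
  obtain ⟨k₁, hk₁⟩ := ih _ hlt W rfl ρW hρW
  obtain ⟨k₂, hk₂⟩ := ih _ hltQ (V ⧸ W) rfl ρQ hρQ
  have hfW : ∀ (l : List S) (w : W),
      ((l.foldr (fun s w => ρW s w) w : W) : V) = l.foldr (fun s v => ρ s v) (w : V) := by
    intro l w
    induction l with
    | nil => rfl
    | cons s l ihl => simp only [List.foldr_cons, ← ihl]; rfl
  have hfQ : ∀ (l : List S) (v : V),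
      l.foldr (fun s q => ρQ s q) (W.mkQ v) = W.mkQ (l.foldr (fun s v => ρ s v) v) := by
    intro l v
    induction l with
    | nil => rfl
    | cons s l ihl => simp only [List.foldr_cons, ihl]; rfl
  refine ⟨k₁ + k₂, fun l hl v => ?_⟩
  -- The last `k₂` factors send `V` into `W`, and the first `k₁` annihilate `W`.
  rw [← List.take_append_drop k₁ l, List.foldr_append]
  have hmem : (l.drop k₁).foldr (fun s v => ρ s v) v ∈ W := by
    have := hk₂ (l.drop k₁) (by simp [hl]) (W.mkQ v)
    rw [hfQ] at this
    simpa using this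
  have := hfW (l.take k₁) ⟨_, hmem⟩
  rw [hk₁ _ (by simp [hl])] at this
  exact this.symm

/-- A nonempty subsemigroup `S` of `M(n,F)` is nilpotent (some fixed length product of
elements of `S` always vanishes) if and only if every element of `S` is a nilpotent
matrix. -/
theorem nilpotent_subsemigroup_iff_all_nilpotent {F : Type*} [Field F] {n : ℕ}
    (S : Subsemigroup (Matrix (Fin n) (Fin n) F))
    (hS : (S : Set (Matrix (Fin n) (Fin n) F)).Nonempty) :
    (∃ k : ℕ, 1 ≤ k ∧ ∀ l : List (Matrix (Fin n) (Fin n) F),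
      l.length = k → (∀ a ∈ l, a ∈ S) → l.prod = 0) ↔
    (∀ A ∈ S, IsNilpotent A) := by
  constructor
  · rintro ⟨k, -, h⟩ A hA
    refine ⟨k, ?_⟩
    rw [← List.prod_replicate]
    exact h _ List.length_replicate fun a ha => List.eq_of_mem_replicate ha ▸ hA
  · intro h
    let ρ : S →ₙ* Module.End F (Fin n → F) :=
      { toFun := fun s => Matrix.toLin' (s : Matrix (Fin n) (Fin n) F)
        map_mul' := fun s t => Matrix.toLin'_mul _ _ }
    have hρ : ∀ s, IsNilpotent (ρ s) := fun s => by
      obtain ⟨m, hm⟩ := h s s.2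
      refine ⟨m, ?_⟩
      change (Matrix.toLin' (s : Matrix (Fin n) (Fin n) F)) ^ m = 0
      rw [← Matrix.toLin'_pow, hm, map_zero]
    obtain ⟨k, hk⟩ := levitzki_action _ (Fin n → F) rfl ρ hρ
    have hprod : ∀ (l : List S) (v : Fin n → F),
        l.foldr (fun s w => ρ s w) v = Matrix.toLin' (l.map Subtype.val).prod v := by
      intro l v
      induction l with
      | nil => simp
      | cons s l ihl =>
        rw [List.foldr_cons, ihl, List.map_cons, List.prod_cons, Matrix.toLin'_mul]; rfl
    -- `k` may be `0` (when `n = 0`), so one further factor is allowed.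
    refine ⟨k + 1, by omega, fun l hl hmem => ?_⟩
    lift l to List S using hmem
    cases l with
    | nil => simp at hl
    | cons s t =>
      have ht : (t.map Subtype.val).prod = (0 : Matrix (Fin n) (Fin n) F) := by
        apply Matrix.toLin'.injective
        ext1 i
        ext1
        rw [LinearMap.comp_apply, ← hprod, hk t (by simpa using hl)]
        simp
      rw [List.map_cons, List.prod_cons, ht, mul_zero]
end

section
/- Let F be a field, n ≥ 1 and k ≥ 2. A subsemigroup S of M(n,F) is a k-maximal nilpotent subsemigroup if and only if S = φ(𝓕) for some flag 𝓕 of length k in F^n. -/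
section Helpers

variable {F : Type*} [Field F] {n k : ℕ}

theorem exists_mem_phiFlag_mulVec_eq {V : Fin (k + 1) → Submodule F (Fin n → F)}
    (hV : IsFlag V) {i : Fin (k + 1)} {x u : Fin n → F} (hx : x ∉ V i) (hu : u ∈ V i) :
    ∃ A ∈ phiFlag V, A.mulVec x = u := by
  obtain ⟨f, hfx, hf⟩ := Submodule.exists_le_ker_of_notMem hx
  -- The rank-one map `v ↦ (f v / f x) • u`, where `f` vanishes on `V i`.
  refine ⟨LinearMap.toMatrix' (((f x)⁻¹ • f).smulRight u), ?_, ?_⟩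
  · intro j v hv
    rw [LinearMap.toMatrix'_mulVec]
    by_cases hij : j.succ ≤ i
    · have : f v = 0 := hf (hV.2.2.monotone hij hv)
      simp [this]
    · have hle : i ≤ j.castSucc := by
        rw [not_le] at hij
        exact Fin.le_castSucc_iff.mpr hij
      simpa using (V j.castSucc).smul_mem _ (hV.2.2.monotone hle hu)
  · rw [LinearMap.toMatrix'_mulVec]
    simp [hfx]

/-- The semigroup `phiFlag V` determines the flag `V` among flags of the same length. -/
theorem IsFlag.eq_of_phiFlag_subset {V W : Fin (k + 1) → Submodule F (Fin n → F)}
    (hV : IsFlag V) (hW : IsFlag W) (h : phiFlag V ⊆ phiFlag W) : V = W := by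
  have h1 : ∀ i, W i ≤ V i := by
    intro i
    induction i using Fin.induction with
    | zero => simp [hW.1]
    | succ i ih =>
      intro w hw
      by_contra hwV
      -- Moving `w` onto any vector of `V (i + 1)` gives `V (i + 1) ≤ W i ≤ V i`.
      have : V i.succ ≤ V i.castSucc := by
        intro u hu
        obtain ⟨A, hA, rfl⟩ := exists_mem_phiFlag_mulVec_eq hV hwV hu
        exact ih (h hA i w hw)
      exact (hV.2.2 i.castSucc_lt_succ).not_ge this
  have h2 : ∀ i, V i ≤ W i := by
    intro i
    induction i using Fin.reverseInduction with
    | last => simp [hW.2.1]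
    | cast i ih =>
      intro u hu
      obtain ⟨x, hx, hxi⟩ := SetLike.exists_of_lt (hV.2.2 i.castSucc_lt_succ)
      obtain ⟨A, hA, rfl⟩ := exists_mem_phiFlag_mulVec_eq hV hxi hu
      exact h hA i x (ih hx)
  exact funext fun i => le_antisymm (h2 i) (h1 i)

theorem IsFlag.mul_mem {V : Fin (k + 1) → Submodule F (Fin n → F)} (hV : IsFlag V)
    {A B : Matrix (Fin n) (Fin n) F} (hA : A ∈ phiFlag V) (hB : B ∈ phiFlag V) :
    A * B ∈ phiFlag V := by
  intro i v hv
  rw [← Matrix.mulVec_mulVec]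
  exact hA i _ (hV.2.2.monotone i.castSucc_lt_succ.le (hB i v hv))

theorem IsFlag.prod_mulVec_eq_zero {V : Fin (k + 1) → Submodule F (Fin n → F)} (hV : IsFlag V)
    (l : List (Matrix (Fin n) (Fin n) F)) (hl : ∀ a ∈ l, a ∈ phiFlag V)
    (hk : l.length < k + 1) {v : Fin n → F} (hv : v ∈ V ⟨l.length, hk⟩) :
    l.prod.mulVec v = 0 := by
  induction l using List.reverseRecOn generalizing v with
  | nil =>
    have : v ∈ V 0 := hv
    simpa [hV.1] using this
  | append_singleton l a ih =>
    rw [List.prod_append, List.prod_singleton, ← Matrix.mulVec_mulVec]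
    have hk' : l.length < k := by simpa using hk
    refine ih (fun b hb => hl b (by simp [hb])) (by omega) ?_
    refine hl a (by simp) ⟨l.length, hk'⟩ v ?_
    convert hv using 2
    simp

theorem IsFlag.exists_prod_mulVec_ne_zero {V : Fin (k + 1) → Submodule F (Fin n → F)}
    (hV : IsFlag V) (j : ℕ) (hj : j < k + 1) {x : Fin n → F} (hx : x ∉ V ⟨j, hj⟩) :
    ∃ l : List (Matrix (Fin n) (Fin n) F), l.length = j ∧ (∀ a ∈ l, a ∈ phiFlag V) ∧
      l.prod.mulVec x ≠ 0 := by
  induction j generalizing x with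
  | zero =>
    refine ⟨[], rfl, by simp, ?_⟩
    have : x ∉ V 0 := hx
    simpa [hV.1] using this
  | succ j ih =>
    have hlt : V ⟨j, by omega⟩ < V ⟨j + 1, hj⟩ := hV.2.2 (by simp)
    obtain ⟨u, hu, huj⟩ := SetLike.exists_of_lt hlt
    obtain ⟨A, hA, hAx⟩ := exists_mem_phiFlag_mulVec_eq hV hx hu
    obtain ⟨l, hl, hlV, hne⟩ := ih (by omega) huj
    refine ⟨l ++ [A], by simp [hl], ?_, ?_⟩
    · intro a ha
      rcases List.mem_append.mp ha with ha | ha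
      · exact hlV a ha
      · rw [List.mem_singleton.mp ha]; exact hA
    · rwa [List.prod_append, List.prod_singleton, ← Matrix.mulVec_mulVec, hAx]

theorem IsFlag.nilpotentOfDegree (hk : 2 ≤ k) {V : Fin (k + 1) → Submodule F (Fin n → F)}
    (hV : IsFlag V) : NilpotentOfDegree (phiFlag V) k := by
  constructor
  · intro l hl hlV
    subst hl
    refine Matrix.mulVec_injective (funext fun v => ?_)
    rw [Matrix.zero_mulVec]
    refine hV.prod_mulVec_eq_zero l hlV (Nat.lt_succ_self _) ?_
    have : v ∈ V (Fin.last _) := by rw [hV.2.1]; trivial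
    exact this
  · have hlt : V ⟨k - 1, by omega⟩ < V (Fin.last k) :=
      hV.2.2 (by rw [Fin.lt_def]; simp only [Fin.val_last]; omega)
    obtain ⟨x, -, hx⟩ := SetLike.exists_of_lt hlt
    obtain ⟨l, hl, hlV, hne⟩ := hV.exists_prod_mulVec_ne_zero (k - 1) (by omega) hx
    exact ⟨l, hl, hlV, fun h => hne (by rw [h, Matrix.zero_mulVec])⟩

/-- The common kernel of all products of `i` elements of `T`. -/
def kerChain (T : Set (Matrix (Fin n) (Fin n) F)) (i : ℕ) : Submodule F (Fin n → F) where
  carrier := {v | ∀ l : List (Matrix (Fin n) (Fin n) F), l.length = i → (∀ a ∈ l, a ∈ T) →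
    l.prod.mulVec v = 0}
  add_mem' := fun hx hy l hl hT => by
    rw [Matrix.mulVec_add, hx l hl hT, hy l hl hT, add_zero]
  zero_mem' := fun l _ _ => Matrix.mulVec_zero _
  smul_mem' := fun c x hx l hl hT => by
    rw [Matrix.mulVec_smul, hx l hl hT, smul_zero]

theorem mem_kerChain_succ {T : Set (Matrix (Fin n) (Fin n) F)} {i : ℕ} {v : Fin n → F} :
    v ∈ kerChain T (i + 1) ↔ ∀ a ∈ T, a.mulVec v ∈ kerChain T i := by
  constructor
  · intro h a ha l hl hlT
    have := h (l ++ [a]) (by simp [hl]) (by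
      intro b hb
      rcases List.mem_append.mp hb with hb | hb
      · exact hlT b hb
      · rw [List.mem_singleton.mp hb]; exact ha)
    rwa [List.prod_append, List.prod_singleton, ← Matrix.mulVec_mulVec] at this
  · intro h l hl hlT
    rcases List.eq_nil_or_concat' l with rfl | ⟨l', a, rfl⟩
    · simp at hl
    · rw [List.prod_append, List.prod_singleton, ← Matrix.mulVec_mulVec]
      exact h a (hlT a (by simp)) l' (by simpa using hl) (fun b hb => hlT b (by simp [hb]))

theorem kerChain_le_succ (T : Set (Matrix (Fin n) (Fin n) F)) (i : ℕ) :
    kerChain T i ≤ kerChain T (i + 1) := by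
  intro v hv l hl hlT
  obtain ⟨a, l', rfl⟩ := List.exists_cons_of_length_eq_add_one hl
  rw [List.prod_cons, ← Matrix.mulVec_mulVec,
    hv l' (by simpa using hl) (fun b hb => hlT b (by simp [hb])), Matrix.mulVec_zero]

/-- Once the kernel chain stops growing, it is constant. -/
theorem kerChain_stable {T : Set (Matrix (Fin n) (Fin n) F)} {i : ℕ}
    (h : kerChain T (i + 1) ≤ kerChain T i) (d : ℕ) :
    kerChain T (i + d + 1) ≤ kerChain T (i + d) := by
  induction d with
  | zero => exact h
  | succ d ih =>
    intro v hv
    exact mem_kerChain_succ.mpr fun a ha => ih (mem_kerChain_succ.mp hv a ha)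

/-- The kernel chain of a nilpotent set of degree `k` is a flag of length `k`, which the set
lowers. -/
theorem NilpotentOfDegree.exists_flag (hk : 2 ≤ k) {T : Set (Matrix (Fin n) (Fin n) F)}
    (hT : NilpotentOfDegree T k) :
    ∃ V : Fin (k + 1) → Submodule F (Fin n → F), IsFlag V ∧ T ⊆ phiFlag V := by
  have htop : kerChain T k = ⊤ :=
    eq_top_iff.mpr fun v _ l hl hlT => by rw [hT.1 l hl hlT, Matrix.zero_mulVec]
  refine ⟨fun i => kerChain T i, ⟨?_, htop, ?_⟩, ?_⟩
  · refine (Submodule.eq_bot_iff _).mpr fun v hv => ?_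
    simpa using hv [] rfl (by simp)
  · refine Fin.strictMono_iff_lt_succ.mpr fun i => ?_
    refine lt_of_le_not_ge (kerChain_le_succ T i) fun h => ?_
    have hs := kerChain_stable (T := T) (i := i) h (k - 1 - i)
    have e : (i : ℕ) + (k - 1 - i) = k - 1 := by omega
    rw [e, Nat.sub_add_cancel (by omega), htop] at hs
    obtain ⟨l, hl, hlT, hne⟩ := hT.2
    refine hne (Matrix.mulVec_injective (funext fun v => ?_))
    rw [Matrix.zero_mulVec]
    exact hs (Submodule.mem_top (x := v)) l hl hlT
  · intro a ha i v hv
    exact mem_kerChain_succ.mp hv a ha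

end Helpers

/-- A subsemigroup `S` of `M(n,F)` is a `k`-maximal nilpotent subsemigroup (nilpotent of
degree `k`, and maximal with respect to inclusion among nilpotent subsemigroups of degree
`k`) if and only if `S = φ(𝓕)` for some flag `𝓕` of length `k` in `F^n`. -/
theorem kMaximal_iff_phiFlag {F : Type*} [Field F] {n k : ℕ} (hn : 0 < n) (hk : 2 ≤ k)
    (S : Subsemigroup (Matrix (Fin n) (Fin n) F)) :
    (NilpotentOfDegree (S : Set (Matrix (Fin n) (Fin n) F)) k ∧
      ∀ T : Subsemigroup (Matrix (Fin n) (Fin n) F),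
        NilpotentOfDegree (T : Set (Matrix (Fin n) (Fin n) F)) k → S ≤ T → S = T) ↔
    (∃ V : Fin (k + 1) → Submodule F (Fin n → F),
      IsFlag V ∧ (S : Set (Matrix (Fin n) (Fin n) F)) = phiFlag V) := by
  constructor
  · rintro ⟨hS, hmax⟩
    obtain ⟨V, hV, hSV⟩ := hS.exists_flag hk
    let T : Subsemigroup (Matrix (Fin n) (Fin n) F) :=
      { carrier := phiFlag V, mul_mem' := fun hA hB => hV.mul_mem hA hB }
    exact ⟨V, hV, congrArg SetLike.coe (hmax T (hV.nilpotentOfDegree hk) hSV)⟩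
  · rintro ⟨V, hV, hSV⟩
    refine ⟨hSV ▸ hV.nilpotentOfDegree hk, fun T hT hST => le_antisymm hST ?_⟩
    obtain ⟨W, hW, hTW⟩ := hT.exists_flag hk
    have hVW : V = W := hV.eq_of_phiFlag_subset hW fun A hA =>
      hTW (hST (show A ∈ (S : Set (Matrix (Fin n) (Fin n) F)) from hSV ▸ hA))
    subst hVW
    rw [← hSV] at hTW
    exact hTW
end

section
/- Let F be a field and let 𝓕 : 0 = V_0 ⊊ V_1 ⊊ ⋯ ⊊ V_k = F^n and 𝓕' : 0 = V'_0 ⊊ V'_1 ⊊ ⋯ ⊊ V'_{k'} = F^n be flags in F^n. Then φ(𝓕') ⊆ φ(𝓕) if and only if 𝓕 is a consolidation of 𝓕', i.e. for every i ∈ {0,…,k'} there exists j ∈ {0,…,k} with V'_i = V_j. -/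
theorem exists_step {k : ℕ} {P : Fin (k + 1) → Prop} (h0 : P 0) (hl : ¬ P (Fin.last k)) :
    ∃ j : Fin k, P j.castSucc ∧ ¬ P j.succ := by
  by_contra! h
  exact hl (Fin.induction (motive := P) h0 h (Fin.last k))

theorem rankOne_mem_phiFlag {F : Type*} [Field F] {n k : ℕ}
    {V : Fin (k + 1) → Submodule F (Fin n → F)} (hV : Monotone V) (i : Fin (k + 1))
    (f : (Fin n → F) →ₗ[F] F) (hf : ∀ w ∈ V i, f w = 0) {y : Fin n → F} (hy : y ∈ V i) :
    LinearMap.toMatrix' (f.smulRight y) ∈ phiFlag V := by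
  intro j v hv
  rw [LinearMap.toMatrix'_mulVec, LinearMap.smulRight_apply]
  rcases le_or_gt j.succ i with h | h
  · rw [hf v (hV h hv), zero_smul]
    exact zero_mem _
  · exact Submodule.smul_mem _ _ (hV (Fin.le_castSucc_iff.mpr h) hy)

/-- `φ(𝓕') ⊆ φ(𝓕)` if and only if `𝓕` is a consolidation of `𝓕'`, i.e. every subspace
occurring in `𝓕'` occurs in `𝓕`. -/
theorem phiFlag_subset_iff_consolidation {F : Type*} [Field F] {n k k' : ℕ}
    (V : Fin (k + 1) → Submodule F (Fin n → F)) (hV : IsFlag V)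
    (V' : Fin (k' + 1) → Submodule F (Fin n → F)) (hV' : IsFlag V') :
    phiFlag V' ⊆ phiFlag V ↔ ∀ i : Fin (k' + 1), ∃ j : Fin (k + 1), V' i = V j := by
  constructor
  · intro h i
    by_cases hW : V' i = ⊤
    · exact ⟨Fin.last k, hW.trans hV.2.1.symm⟩
    obtain ⟨j, hj, hj'⟩ := exists_step (P := fun j => V j ≤ V' i)
      (by simp [hV.1]) (by simpa [hV.2.1] using hW)
    refine ⟨j.castSucc, le_antisymm (fun y hy => ?_) hj⟩
    obtain ⟨x, hx, hxW⟩ := SetLike.not_le_iff_exists.mp hj'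
    obtain ⟨f, hfx, hf⟩ := Submodule.exists_le_ker_of_notMem hxW
    have key := h (rankOne_mem_phiFlag hV'.2.2.monotone i f (fun w hw => hf hw) hy) j x hx
    rw [LinearMap.toMatrix'_mulVec, LinearMap.smulRight_apply] at key
    exact (Submodule.smul_mem_iff _ hfx).mp key
  · intro h A hA i v hv
    obtain ⟨p, hp, hp'⟩ := exists_step (P := fun p => V' p ≤ V i.castSucc)
      (by simp [hV'.1]) (by
        rw [hV'.2.1, top_le_iff]
        exact ((hV.2.2 i.castSucc_lt_succ).trans_le le_top).ne)
    obtain ⟨j, hj⟩ := h p.succ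
    have hij : i.succ ≤ j := by
      by_contra! hlt
      exact hp' (hj.trans_le (hV.2.2.monotone (Fin.le_castSucc_iff.mpr hlt)))
    exact hp (hA p v (hj ▸ hV.2.2.monotone hij hv))
end

section
/- Let F be a finite field and n ≥ 2. Let 𝓕 : 0 ⊊ V_1 ⊊ F^n and 𝓕' : 0 ⊊ V'_1 ⊊ F^n be two flags of length 2 in F^n, with m = dim V_1 and m' = dim V'_1. Then the semigroups φ(𝓕) and φ(𝓕') are isomorphic if and only if m = m' or m = n − m' (equivalently, {dim V_1, dim(F^n/V_1)} = {dim V'_1, dim(F^n/V'_1)} as unordered pairs). -/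
/-- A matrix lies in `φ(𝓕)`, for a flag of length two, iff it kills `V₁` and maps into `V₁`. -/
lemma mem_phiFlag_two_iff {F : Type*} [Field F] {n : ℕ}
    {V : Fin 3 → Submodule F (Fin n → F)} (hV : IsFlag V) (A : Matrix (Fin n) (Fin n) F) :
    A ∈ phiFlag V ↔ (∀ v ∈ V 1, A.mulVec v = 0) ∧ ∀ v, A.mulVec v ∈ V 1 := by
  obtain ⟨h0, h2, -⟩ := hV
  have h2' : V 2 = ⊤ := h2
  simp [phiFlag, Fin.forall_fin_two, h0, h2']

lemma mul_eq_zero_of_mem_phiFlag_two {F : Type*} [Field F] {n : ℕ}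
    {V : Fin 3 → Submodule F (Fin n → F)} (hV : IsFlag V) {A B : Matrix (Fin n) (Fin n) F}
    (hA : A ∈ phiFlag V) (hB : B ∈ phiFlag V) : A * B = 0 := by
  rw [mem_phiFlag_two_iff hV] at hA hB
  apply Matrix.toLin'.injective
  apply LinearMap.ext
  intro v
  rw [Matrix.toLin'_apply, ← Matrix.mulVec_mulVec, hA.1 _ (hB.2 _)]
  simp

/-- `φ(𝓕)` is the image of `Hom(F^n / V₁, V₁)` under the injection that composes a map with the
quotient map and the inclusion, so it is a subspace of dimension `m (n - m)`. -/
lemma exists_submodule_eq_phiFlag {F : Type*} [Field F] {n : ℕ}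
    {V : Fin 3 → Submodule F (Fin n → F)} (hV : IsFlag V) :
    ∃ W : Submodule F (Matrix (Fin n) (Fin n) F), (W : Set _) = phiFlag V ∧
      Module.finrank F W =
        Module.finrank F (V 1) * (n - Module.finrank F (V 1)) := by
  let T : (((Fin n → F) ⧸ V 1) →ₗ[F] V 1) →ₗ[F] Matrix (Fin n) (Fin n) F :=
    { toFun := fun g => LinearMap.toMatrix' ((V 1).subtype ∘ₗ g ∘ₗ (V 1).mkQ)
      map_add' := fun g h => by
        rw [← map_add]; rfl
      map_smul' := fun c g => by
        rw [RingHom.id_apply, ← map_smul]; rfl }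
  have hT : ∀ g v, (T g).mulVec v = (g ((V 1).mkQ v) : Fin n → F) := fun g v => by
    change (LinearMap.toMatrix' ((V 1).subtype ∘ₗ g ∘ₗ (V 1).mkQ)).mulVec v = _
    rw [LinearMap.toMatrix'_mulVec]; rfl
  have hinj : Function.Injective T := fun g h hgh => by
    apply LinearMap.ext
    intro x
    obtain ⟨v, rfl⟩ := (V 1).mkQ_surjective x
    apply Subtype.ext
    rw [← hT, ← hT, hgh]
  refine ⟨LinearMap.range T, ?_, ?_⟩
  · ext A
    rw [mem_phiFlag_two_iff hV]
    constructor
    · rintro ⟨g, rfl⟩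
      refine ⟨fun v hv => ?_, fun v => ?_⟩
      · rw [hT, Submodule.mkQ_apply, (Submodule.Quotient.mk_eq_zero _).2 hv]; simp
      · rw [hT]; exact Subtype.prop _
    · rintro ⟨h1, h2⟩
      refine ⟨(V 1).liftQ ((Matrix.toLin' A).codRestrict (V 1) h2) fun v hv => ?_, ?_⟩
      · exact Subtype.ext (h1 v hv)
      · apply Matrix.toLin'.injective
        apply LinearMap.ext
        intro v
        rw [Matrix.toLin'_apply, hT]
        rfl
  · rw [LinearMap.finrank_range_of_inj hinj, Module.finrank_linearMap, mul_comm]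
    have := (V 1).finrank_quotient_add_finrank
    rw [Module.finrank_fin_fun] at this
    congr 1
    omega

lemma finrank_le_of_submodule_fin {F : Type*} [Field F] {n : ℕ}
    (U : Submodule F (Fin n → F)) : Module.finrank F U ≤ n := by
  simpa using U.finrank_le

lemma mul_sub_eq_mul_sub_iff {n a b : ℕ} (ha : a ≤ n) (hb : b ≤ n) :
    a * (n - a) = b * (n - b) ↔ a = b ∨ a = n - b := by
  obtain ⟨c, rfl⟩ := Nat.exists_eq_add_of_le ha
  obtain ⟨d, hd⟩ := Nat.exists_eq_add_of_le hb
  rw [hd, Nat.add_sub_cancel_left, ← hd, Nat.add_sub_cancel_left]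
  constructor
  · intro h
    have key : ((a : ℤ) - b) * (a - d) = 0 := by
      zify at h hd
      linear_combination (a : ℤ) * hd - h
    rcases mul_eq_zero.1 key with h | h
    · left; omega
    · right; omega
  · rintro (rfl | rfl)
    · obtain rfl : c = d := by omega
      rfl
    · obtain rfl : c = b := by omega
      exact mul_comm _ _

/-- Over a finite field, for flags `𝓕 : 0 ⊊ V_1 ⊊ F^n` and `𝓕' : 0 ⊊ V'_1 ⊊ F^n` of
length 2, the semigroups `φ(𝓕)` and `φ(𝓕')` are isomorphic if and only if
`m = m'` or `m = n - m'`, where `m = dim V_1` and `m' = dim V'_1`. -/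
theorem phiFlag_length_two_isomorphic_iff_of_finite {F : Type*} [Field F] [Finite F]
    {n : ℕ} (hn : 2 ≤ n)
    (V : Fin 3 → Submodule F (Fin n → F)) (hV : IsFlag V)
    (V' : Fin 3 → Submodule F (Fin n → F)) (hV' : IsFlag V')
    (m m' : ℕ) (hm : Module.finrank F (V 1) = m) (hm' : Module.finrank F (V' 1) = m') :
    (∃ f : Matrix (Fin n) (Fin n) F → Matrix (Fin n) (Fin n) F,
      Set.BijOn f (phiFlag V) (phiFlag V') ∧
      ∀ a ∈ phiFlag V, ∀ b ∈ phiFlag V, f (a * b) = f a * f b) ↔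
    (m = m' ∨ m = n - m') := by
  obtain ⟨W, hW, hWr⟩ := exists_submodule_eq_phiFlag hV
  obtain ⟨W', hW', hWr'⟩ := exists_submodule_eq_phiFlag hV'
  rw [hm] at hWr
  rw [hm'] at hWr'
  rw [← mul_sub_eq_mul_sub_iff (hm ▸ finrank_le_of_submodule_fin _)
    (hm' ▸ finrank_le_of_submodule_fin _), ← hWr, ← hWr']
  constructor
  · rintro ⟨f, hf, -⟩
    rw [← hW, ← hW'] at hf
    have hc : Nat.card W = Nat.card W' := Nat.card_congr (hf.equiv f)
    rw [Module.natCard_eq_pow_finrank (K := F) (V := W),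
      Module.natCard_eq_pow_finrank (K := F) (V := W')] at hc
    exact Nat.pow_right_injective (Finite.one_lt_card (α := F)) hc
  · intro h
    let e : W ≃ₗ[F] W' := LinearEquiv.ofFinrankEq W W' h
    classical
    let f : Matrix (Fin n) (Fin n) F → Matrix (Fin n) (Fin n) F :=
      fun A => if hA : A ∈ W then (e ⟨A, hA⟩ : Matrix (Fin n) (Fin n) F) else 0
    have hfe : ∀ x : W, f x = e x := fun x => by simp [f]
    have hbij : Set.BijOn f (phiFlag V) (phiFlag V') := by
      rw [← hW, ← hW']
      refine ⟨fun A hA => ?_, fun A hA B hB hAB => ?_, fun B hB => ?_⟩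
      · rw [hfe ⟨A, hA⟩]; exact (e _).2
      · rw [hfe ⟨A, hA⟩, hfe ⟨B, hB⟩] at hAB
        exact congrArg Subtype.val (e.injective (Subtype.ext hAB))
      · refine ⟨e.symm ⟨B, hB⟩, (e.symm _).2, ?_⟩
        rw [hfe, e.apply_symm_apply]
    refine ⟨f, hbij, fun a ha b hb => ?_⟩
    rw [mul_eq_zero_of_mem_phiFlag_two hV ha hb,
      mul_eq_zero_of_mem_phiFlag_two hV' (hbij.mapsTo ha) (hbij.mapsTo hb)]
    simpa using hfe 0
end

section
/- Let F be an infinite field, let k, l, m, p > 1, let 𝓕 be a flag of length 3 in F^{k+1+l} with sig(𝓕) = (k, 1, l), and let 𝓕' be a flag of length 3 in F^{m+1+p} with sig(𝓕') = (m, 1, p). Then the semigroups φ(𝓕) and φ(𝓕') are isomorphic. -/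
/-- The signature of a flag: `sig(𝓕)_i = dim(V_{i+1}/V_i)`. -/
noncomputable def flagSig {F : Type*} [Field F] {n k : ℕ}
    (V : Fin (k + 1) → Submodule F (Fin n → F)) (i : Fin k) : ℕ :=
  Module.finrank F (V i.succ) - Module.finrank F (V i.castSucc)

/-! ### Scalar-equivariant bijections between vector spaces -/

open Cardinal in
theorem mk_fin_fun (F : Type*) [Infinite F] {k : ℕ} (hk : 1 < k) : #(Fin k → F) = #F := by
  rw [Cardinal.mk_arrow, Cardinal.mk_fin, Cardinal.lift_id'.{0}]
  simp only [Cardinal.lift_natCast]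
  exact Cardinal.power_nat_eq (Cardinal.aleph0_le_mk F) (by omega)

open Cardinal in
theorem mk_projectivization (F : Type*) [Field F] [Infinite F] {k : ℕ} (hk : 1 < k) :
    #(Projectivization F (Fin k → F)) = #F := by
  apply le_antisymm
  · rw [← mk_fin_fun F hk]
    exact Cardinal.mk_le_of_injective (f := Projectivization.rep)
      (fun x y h => by rw [← x.mk_rep, ← y.mk_rep]; simp only [h])
  · -- the points `[1 : c : c : ⋯ : c]`
    have hne : ∀ c : F, (fun i : Fin k => if i = ⟨0, by omega⟩ then 1 else c) ≠ 0 := by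
      intro c h
      simpa using congrFun h ⟨0, by omega⟩
    refine Cardinal.mk_le_of_injective (f := fun c : F => Projectivization.mk F _ (hne c)) ?_
    intro c d h
    simp only [Projectivization.mk_eq_mk_iff'] at h
    obtain ⟨a, ha⟩ := h
    have h0 := congrFun ha ⟨0, by omega⟩
    have h1 := congrFun ha ⟨1, hk⟩
    simp at h0 h1
    rw [← h1, h0, one_mul]

/-- Provides the dilation factor `s v` of `v` with respect to the chosen representative of the line
through `v`. -/
theorem exists_factor {F V : Type*} [Field F] [AddCommGroup V] [Module F V] :
    ∃ s : V → F, ∀ v (hv : v ≠ 0), s v ≠ 0 ∧ v = s v • (Projectivization.mk F v hv).rep := by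
  classical
  have h : ∀ v : V, ∃ c : F, ∀ hv : v ≠ 0, c ≠ 0 ∧ v = c • (Projectivization.mk F v hv).rep := by
    intro v
    by_cases hv : v = 0
    · exact ⟨0, fun h => absurd hv h⟩
    · obtain ⟨a, ha⟩ := Projectivization.exists_smul_eq_mk_rep F v hv
      refine ⟨(a⁻¹ : Fˣ), fun _ => ⟨Units.ne_zero _, ?_⟩⟩
      rw [← ha, ← Units.smul_def, inv_smul_smul]
  choose s hs using h
  exact ⟨s, hs⟩

/-- A bijection of projective spaces lifts to a bijection of vector spaces commuting with scalars;
it need not be additive. -/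
theorem exists_homogeneous_of_equiv {F V W : Type*} [Field F] [AddCommGroup V] [Module F V]
    [AddCommGroup W] [Module F W] (σ : Projectivization F V ≃ Projectivization F W) :
    ∃ α : V ≃ W, ∀ (c : F) v, α (c • v) = c • α v := by
  classical
  obtain ⟨s, hs⟩ := exists_factor (F := F) (V := V)
  obtain ⟨t, ht⟩ := exists_factor (F := F) (V := W)
  let α : V → W := fun v => if hv : v = 0 then 0 else s v • (σ (Projectivization.mk F v hv)).rep
  have α0 : α 0 = 0 := by simp [α]
  have αne : ∀ v (hv : v ≠ 0), α v = s v • (σ (Projectivization.mk F v hv)).rep := by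
    intro v hv; simp [α, hv]
  have αnz : ∀ v, v ≠ 0 → α v ≠ 0 := by
    intro v hv
    rw [αne v hv]
    exact smul_ne_zero (hs v hv).1 (Projectivization.rep_nonzero _)
  have αmk : ∀ v (hv : v ≠ 0),
      Projectivization.mk F (α v) (αnz v hv) = σ (Projectivization.mk F v hv) := by
    intro v hv
    conv_rhs => rw [← (σ (Projectivization.mk F v hv)).mk_rep]
    rw [Projectivization.mk_eq_mk_iff']
    exact ⟨s v, (αne v hv).symm⟩
  have αrep : ∀ (x : Projectivization F V) (c : F), α (c • x.rep) = c • (σ x).rep := by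
    intro x c
    by_cases hc : c = 0
    · simp [hc, α0]
    have hne : c • x.rep ≠ 0 := smul_ne_zero hc x.rep_nonzero
    have hx : Projectivization.mk F _ hne = x := by
      conv_rhs => rw [← x.mk_rep]
      rw [Projectivization.mk_eq_mk_iff']
      exact ⟨c, rfl⟩
    have h := (hs _ hne).2
    rw [hx] at h
    have h2 : s (c • x.rep) = c := (smul_left_injective F x.rep_nonzero h).symm
    rw [αne _ hne, hx, h2]
  have hom : ∀ (c : F) v, α (c • v) = c • α v := by
    intro c v
    by_cases hv : v = 0
    · simp [hv, α0]
    · conv_lhs => rw [(hs v hv).2]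
      rw [smul_smul, αrep, αne v hv, smul_smul]
  refine ⟨Equiv.ofBijective α ⟨?_, ?_⟩, hom⟩
  · intro v w h
    by_cases hv : v = 0
    · by_contra hne
      have hw : w ≠ 0 := fun hw => hne (by rw [hv, hw])
      exact αnz w hw (by rw [← h, hv, α0])
    by_cases hw : w = 0
    · exact absurd (by rw [h, hw, α0]) (αnz v hv)
    have hmk : Projectivization.mk F v hv = Projectivization.mk F w hw := by
      apply σ.injective
      rw [← αmk, ← αmk]
      simp only [h]
    rw [αne v hv, αne w hw, hmk] at h
    have h2 := smul_left_injective F (Projectivization.rep_nonzero _) h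
    rw [(hs v hv).2, (hs w hw).2, hmk, h2]
  · intro w
    by_cases hw : w = 0
    · exact ⟨0, by rw [hw, α0]⟩
    · refine ⟨t w • (σ.symm (Projectivization.mk F w hw)).rep, ?_⟩
      rw [αrep, Equiv.apply_symm_apply, ← (ht w hw).2]

theorem exists_homogeneous (F : Type*) [Field F] [Infinite F] {k m : ℕ} (hk : 1 < k) (hm : 1 < m) :
    ∃ α : (Fin k → F) ≃ (Fin m → F), ∀ (c : F) v, α (c • v) = c • α v := by
  obtain ⟨σ⟩ := Cardinal.eq.1 ((mk_projectivization F hk).trans (mk_projectivization F hm).symm)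
  exact exists_homogeneous_of_equiv σ

/-! ### Outer products -/

/-- A nonzero outer product determines its factors up to a scalar moved across. -/
theorem vecMulVec_eq {F ι κ : Type*} [Field F] {a a' : ι → F} {b b' : κ → F}
    (h : Matrix.vecMulVec a b = Matrix.vecMulVec a' b') :
    ((a = 0 ∨ b = 0) ∧ (a' = 0 ∨ b' = 0)) ∨ ∃ c : F, a' = c • a ∧ b = c • b' := by
  have he : ∀ i j, a i * b j = a' i * b' j := fun i j => congrFun (congrFun h i) j
  by_cases h1 : a = 0 ∨ b = 0
  · left
    refine ⟨h1, ?_⟩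
    by_contra! h2
    obtain ⟨i, hi⟩ := Function.ne_iff.1 h2.1
    obtain ⟨j, hj⟩ := Function.ne_iff.1 h2.2
    refine mul_ne_zero hi hj ((he i j).symm.trans ?_)
    rcases h1 with rfl | rfl <;> simp
  · right
    push Not at h1
    obtain ⟨i, hi⟩ := Function.ne_iff.1 h1.1
    obtain ⟨j, hj⟩ := Function.ne_iff.1 h1.2
    simp only [Pi.zero_apply] at hi hj
    have hb' : b' j ≠ 0 := fun h0 => mul_ne_zero hi hj (by rw [he, h0, mul_zero])
    refine ⟨b j / b' j, ?_, ?_⟩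
    · ext x
      have := he x j
      simp only [Pi.smul_apply, smul_eq_mul]
      field_simp
      linear_combination -this
    · ext y
      have h2 := he i y
      have h3 := he i j
      simp only [Pi.smul_apply, smul_eq_mul]
      field_simp
      apply mul_left_cancel₀ hi
      linear_combination (b' j) * h2 - (b' y) * h3

/-- Scalar-equivariant bijections need not be additive, but they respect equality of outer products,
since this only involves moving scalars between the factors. -/
theorem vecMulVec_congr {F ι κ ι' κ' : Type*} [Field F] (α : (ι → F) ≃ (ι' → F))
    (β : (κ → F) ≃ (κ' → F)) (hα : ∀ (c : F) v, α (c • v) = c • α v)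
    (hβ : ∀ (c : F) v, β (c • v) = c • β v) {a a' : ι → F} {b b' : κ → F}
    (h : Matrix.vecMulVec a b = Matrix.vecMulVec a' b') :
    Matrix.vecMulVec (α a) (β b) = Matrix.vecMulVec (α a') (β b') := by
  have α0 : α 0 = 0 := by simpa using hα 0 0
  have β0 : β 0 = 0 := by simpa using hβ 0 0
  have hz : ∀ {x : ι → F} {y : κ → F}, (x = 0 ∨ y = 0) →
      Matrix.vecMulVec (α x) (β y) = 0 := by
    rintro x y (rfl | rfl)
    · rw [α0, Matrix.zero_vecMulVec]
    · ext i j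
      simp [Matrix.vecMulVec_apply, β0]
  rcases vecMulVec_eq h with ⟨h1, h2⟩ | ⟨c, rfl, rfl⟩
  · rw [hz h1, hz h2]
  · rw [hα, hβ, Matrix.smul_vecMulVec, Matrix.vecMulVec_smul]

theorem symm_homogeneous {F V W : Type*} [Field F] [AddCommGroup V] [Module F V]
    [AddCommGroup W] [Module F W] (α : V ≃ W) (hα : ∀ (c : F) v, α (c • v) = c • α v)
    (c : F) (w : W) : α.symm (c • w) = c • α.symm w := by
  rw [Equiv.symm_apply_eq, hα, Equiv.apply_symm_apply]

/-- A bijection `A ≃ A'` compatible with the fibres of `f` and `f'` descends to the ranges, and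
extends to the codomains when the complements of the ranges are equinumerous. -/
theorem exists_extension {A A' B B' : Type*} (f : A → B) (f' : A' → B') (e : A ≃ A')
    (h : ∀ x y, f x = f y ↔ f' (e x) = f' (e y))
    (σ : ((Set.range f)ᶜ : Set B) ≃ ((Set.range f')ᶜ : Set B')) :
    ∃ γ : B ≃ B', ∀ x, γ (f x) = f' (e x) := by
  classical
  let ρ₀ : Set.range f → Set.range f' := fun y => ⟨f' (e y.2.choose), _, rfl⟩
  have hρ : ∀ x, ρ₀ ⟨f x, x, rfl⟩ = ⟨f' (e x), _, rfl⟩ := by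
    intro x
    have hx : ∃ z, f z = f x := ⟨x, rfl⟩
    exact Subtype.ext ((h _ _).1 hx.choose_spec)
  have hb : Function.Bijective ρ₀ := by
    constructor
    · rintro ⟨_, x, rfl⟩ ⟨_, y, rfl⟩ hxy
      rw [hρ, hρ] at hxy
      exact Subtype.ext ((h _ _).2 (congrArg Subtype.val hxy))
    · rintro ⟨_, x, rfl⟩
      exact ⟨⟨f (e.symm x), _, rfl⟩, by rw [hρ]; simp⟩
  refine ⟨((Equiv.Set.sumCompl (Set.range f)).symm.trans
    (Equiv.sumCongr (Equiv.ofBijective ρ₀ hb) σ)).trans (Equiv.Set.sumCompl (Set.range f')), ?_⟩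
  intro x
  have hx : f x ∈ Set.range f := ⟨x, rfl⟩
  simp [Equiv.Set.sumCompl_symm_apply_of_mem hx, hρ]

/-- The outer product map; its range is the set of matrices of rank at most one. -/
def outer (F : Type*) [Field F] (k l : ℕ) (x : (Fin k → F) × (Fin l → F)) :
    Matrix (Fin k) (Fin l) F := Matrix.vecMulVec x.1 x.2

open Cardinal in
theorem mk_compl_range_outer (F : Type*) [Field F] [Infinite F] {k l : ℕ} (hk : 1 < k)
    (hl : 1 < l) : #((Set.range (outer F k l))ᶜ : Set (Matrix (Fin k) (Fin l) F)) = #F := by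
  apply le_antisymm
  · refine (Cardinal.mk_set_le _).trans ?_
    have h : #(Matrix (Fin k) (Fin l) F) = #F := by
      have : Nonempty (Fin l) := ⟨⟨0, by omega⟩⟩
      have : Infinite (Fin l → F) := inferInstance
      exact (mk_fin_fun (Fin l → F) hk).trans (mk_fin_fun F hl)
    exact h.le
  · -- the matrices with upper left block `[[1, c], [0, 1]]` have rank at least two
    let i0 : Fin k := ⟨0, by omega⟩
    let i1 : Fin k := ⟨1, hk⟩
    let j0 : Fin l := ⟨0, by omega⟩
    let j1 : Fin l := ⟨1, hl⟩
    have hi : i1 ≠ i0 := by simp [i0, i1]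
    have hj : j1 ≠ j0 := by simp [j0, j1]
    let M : F → Matrix (Fin k) (Fin l) F := fun c i j =>
      if i = i0 then (if j = j0 then 1 else c) else (if j = j0 then 0 else 1)
    have hM : ∀ c, M c ∈ (Set.range (outer F k l))ᶜ := by
      rintro c ⟨⟨a, b⟩, h⟩
      have e : ∀ i j, a i * b j = M c i j := fun i j => congrFun (congrFun h i) j
      have h00 := e i0 j0
      have h10 := e i1 j0
      have h11 := e i1 j1
      simp only [M, if_neg hi, if_neg hj, if_true] at h00 h10 h11
      rcases mul_eq_zero.1 h10 with h | h
      · simp [h] at h11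
      · simp [h] at h00
    refine Cardinal.mk_le_of_injective (f := fun c => ⟨M c, hM c⟩) ?_
    intro c d h
    have := congrFun (congrFun (congrArg Subtype.val h) i0) j1
    simpa [M, hj] using this

/-! ### The semigroup of triples -/

/-- Triples `(a, b, C)`, encoding the block matrices `[[0, a, C], [0, 0, b], [0, 0, 0]]`. -/
abbrev Model (F : Type*) (k l : ℕ) := (Fin k → F) × (Fin l → F) × Matrix (Fin k) (Fin l) F

/-- The product of block matrices on triples. -/
def Model.prod {F : Type*} [Field F] {k l : ℕ} (x y : Model F k l) : Model F k l :=
  (0, 0, outer F k l (x.1, y.2.1))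

theorem exists_model_equiv (F : Type*) [Field F] [Infinite F] {k l m p : ℕ} (hk : 1 < k)
    (hl : 1 < l) (hm : 1 < m) (hp : 1 < p) :
    ∃ τ : Model F k l ≃ Model F m p, ∀ x y, τ (x.prod y) = (τ x).prod (τ y) := by
  obtain ⟨α, hα⟩ := exists_homogeneous F hk hm
  obtain ⟨β, hβ⟩ := exists_homogeneous F hl hp
  obtain ⟨σ⟩ := Cardinal.eq.1
    ((mk_compl_range_outer F hk hl).trans (mk_compl_range_outer F hm hp).symm)
  obtain ⟨γ, hγ⟩ := exists_extension (outer F k l) (outer F m p) (Equiv.prodCongr α β)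
    (by
      rintro ⟨a, b⟩ ⟨a', b'⟩
      refine ⟨fun h => vecMulVec_congr α β hα hβ h, fun h => ?_⟩
      have := vecMulVec_congr α.symm β.symm (symm_homogeneous α hα) (symm_homogeneous β hβ) h
      simpa [outer] using this) σ
  have α0 : α 0 = 0 := by simpa using hα 0 0
  have β0 : β 0 = 0 := by simpa using hβ 0 0
  refine ⟨Equiv.prodCongr α (Equiv.prodCongr β γ), fun x y => ?_⟩
  simp [Model.prod, α0, β0, hγ]

/-- The block matrix of a triple, as a linear map. -/
def Model.toLin {F : Type*} [Field F] {k l : ℕ} (x : Model F k l) :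
    ((Fin k → F) × F × (Fin l → F)) →ₗ[F] ((Fin k → F) × F × (Fin l → F)) where
  toFun v := (v.2.1 • x.1 + x.2.2.mulVec v.2.2, x.2.1 ⬝ᵥ v.2.2, 0)
  map_add' v w := by
    ext <;> simp [Matrix.mulVec_add, dotProduct_add, add_mul] ; ring
  map_smul' c v := by
    ext <;> simp [Matrix.mulVec_smul, mul_assoc]

/-! ### Coordinates adapted to a flag -/

/-- Coordinates adapted to a flag of signature `(k, 1, l)`. -/
theorem exists_coords {F : Type*} [Field F] {k l : ℕ}
    (V : Fin 4 → Submodule F (Fin (k + 1 + l) → F)) (hV : IsFlag V)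
    (hs : flagSig V 0 = k ∧ flagSig V 1 = 1 ∧ flagSig V 2 = l) :
    ∃ L : (Fin (k + 1 + l) → F) ≃ₗ[F] ((Fin k → F) × F × (Fin l → F)),
      (∀ v, v ∈ V 1 ↔ (L v).2.1 = 0 ∧ (L v).2.2 = 0) ∧ (∀ v, v ∈ V 2 ↔ (L v).2.2 = 0) := by
  obtain ⟨h0, h3, hmono⟩ := hV
  obtain ⟨s0, s1, s2⟩ := hs
  have lt12 : V 1 < V 2 := hmono (by decide)
  have h3' : V 3 = ⊤ := h3
  have d1 : Module.finrank F (V 1) = k := by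
    have : Module.finrank F (V 1) - Module.finrank F (V 0) = k := s0
    rw [h0, finrank_bot] at this
    omega
  have d12 := Submodule.finrank_lt_finrank_of_lt lt12
  have d2 : Module.finrank F (V 2) = k + 1 := by
    have : Module.finrank F (V 2) - Module.finrank F (V 1) = 1 := s1
    omega
  have dq : Module.finrank F ((Fin (k + 1 + l) → F) ⧸ V 2) = l := by
    have := Submodule.finrank_quotient_add_finrank (V 2)
    rw [d2, Module.finrank_fin_fun] at this
    omega
  obtain ⟨q⟩ : Nonempty (((Fin (k + 1 + l) → F) ⧸ V 2) ≃ₗ[F] (Fin l → F)) :=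
    ⟨LinearEquiv.ofFinrankEq _ _ (by rw [dq, Module.finrank_fin_fun])⟩
  obtain ⟨x₀⟩ : Nonempty (V 1 ≃ₗ[F] (Fin k → F)) :=
    ⟨LinearEquiv.ofFinrankEq _ _ (by rw [d1, Module.finrank_fin_fun])⟩
  obtain ⟨x, hx⟩ := LinearMap.exists_extend x₀.toLinearMap
  obtain ⟨e, he2, he1⟩ := SetLike.exists_of_lt lt12
  obtain ⟨t, hte, ht⟩ := Submodule.exists_le_ker_of_notMem he1
  have hV1 : V 1 = V 2 ⊓ LinearMap.ker t := by
    apply Submodule.eq_of_le_of_finrank_le (le_inf lt12.le ht)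
    have hlt : V 2 ⊓ LinearMap.ker t < V 2 :=
      lt_of_le_of_ne inf_le_left (fun h => hte (by
        have : e ∈ V 2 ⊓ LinearMap.ker t := by rw [h]; exact he2
        exact this.2))
    have := Submodule.finrank_lt_finrank_of_lt hlt
    omega
  let L₀ : (Fin (k + 1 + l) → F) →ₗ[F] ((Fin k → F) × F × (Fin l → F)) :=
    x.prod (t.prod (q.toLinearMap ∘ₗ (V 2).mkQ))
  have m2 : ∀ v, v ∈ V 2 ↔ (L₀ v).2.2 = 0 := by
    intro v
    simp [L₀]
  have m1 : ∀ v, v ∈ V 1 ↔ (L₀ v).2.1 = 0 ∧ (L₀ v).2.2 = 0 := by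
    intro v
    rw [hV1, Submodule.mem_inf, m2, and_comm]
    rfl
  have inj : Function.Injective L₀ := by
    rw [← LinearMap.ker_eq_bot, LinearMap.ker_eq_bot']
    intro v hv
    have hv1 : v ∈ V 1 := (m1 v).2 (by rw [hv]; exact ⟨rfl, rfl⟩)
    have hxv : x v = 0 := congrArg Prod.fst hv
    have h2 : x₀ ⟨v, hv1⟩ = 0 := by
      rw [← hxv]
      exact (LinearMap.congr_fun hx ⟨v, hv1⟩).symm
    exact congrArg Subtype.val (x₀.map_eq_zero_iff.1 h2)
  refine ⟨LinearEquiv.ofInjectiveOfFinrankEq L₀ inj (by simp; ring), fun v => ?_, fun v => ?_⟩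
  · exact m1 v
  · exact m2 v

/-- `φ(𝓕)` is isomorphic to the semigroup of triples. -/
theorem exists_model {F : Type*} [Field F] {k l : ℕ}
    (V : Fin 4 → Submodule F (Fin (k + 1 + l) → F)) (hV : IsFlag V)
    (hs : flagSig V 0 = k ∧ flagSig V 1 = 1 ∧ flagSig V 2 = l) :
    ∃ g : Model F k l → Matrix (Fin (k + 1 + l)) (Fin (k + 1 + l)) F,
      Function.Injective g ∧ Set.range g = phiFlag V ∧ ∀ x y, g (x.prod y) = g x * g y := by
  obtain ⟨L, m1, m2⟩ := exists_coords V hV hs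
  obtain ⟨h0, h3, -⟩ := hV
  have h3' : V 3 = ⊤ := h3
  let g : Model F k l → Matrix (Fin (k + 1 + l)) (Fin (k + 1 + l)) F := fun x =>
    LinearMap.toMatrix' (L.symm.toLinearMap ∘ₗ x.toLin ∘ₗ L.toLinearMap)
  have hg : ∀ x v, (g x).mulVec v = L.symm (x.toLin (L v)) := by
    intro x v
    simp [g, LinearMap.toMatrix'_mulVec]
  have hext : ∀ A B : Matrix (Fin (k + 1 + l)) (Fin (k + 1 + l)) F,
      (∀ w, A.mulVec (L.symm w) = B.mulVec (L.symm w)) → A = B := by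
    intro A B h
    apply Matrix.mulVec_injective
    ext1 v
    simpa using h (L v)
  refine ⟨g, ?_, ?_, ?_⟩
  · intro x y h
    have key : ∀ w, x.toLin w = y.toLin w := by
      intro w
      have := congrArg (fun A => A.mulVec (L.symm w)) h
      simpa [hg] using this
    obtain ⟨a, b, C⟩ := x
    obtain ⟨a', b', C'⟩ := y
    have h1 : a = a' := by simpa [Model.toLin] using congrArg Prod.fst (key (0, 1, 0))
    have h2 : b = b' := by
      ext j
      simpa [Model.toLin] using congrArg (fun z => z.2.1) (key (0, 0, Pi.single j 1))
    have h3 : C = C' := by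
      ext i j
      simpa [Model.toLin] using congrArg (fun z => z.1 i) (key (0, 0, Pi.single j 1))
    rw [h1, h2, h3]
  · ext A
    constructor
    · rintro ⟨x, rfl⟩ i v hv
      rw [hg]
      fin_cases i
      · obtain ⟨ht, hq⟩ := (m1 v).1 hv
        have : x.toLin (L v) = 0 := by simp [Model.toLin, ht, hq]
        rw [this, map_zero]
        exact Submodule.zero_mem _
      · have hq := (m2 v).1 hv
        refine (m1 _).2 ?_
        simp [Model.toLin, hq]
      · refine (m2 _).2 ?_
        simp [Model.toLin]
    · intro hA
      have A1 : ∀ v ∈ V 1, A.mulVec v = 0 := by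
        intro v hv
        have : A.mulVec v ∈ V 0 := hA 0 v hv
        rw [h0] at this
        exact this
      have A2 : ∀ v ∈ V 2, A.mulVec v ∈ V 1 := fun v hv => hA 1 v hv
      have A3 : ∀ v, A.mulVec v ∈ V 2 := fun v => hA 2 v (by
        change v ∈ V 3
        rw [h3']; trivial)
      -- the conjugate of `A` in the adapted coordinates
      let T : ((Fin k → F) × F × (Fin l → F)) →ₗ[F] ((Fin k → F) × F × (Fin l → F)) :=
        L.toLinearMap ∘ₗ A.mulVecLin ∘ₗ L.symm.toLinearMap
      have hT : ∀ w, T w = L (A.mulVec (L.symm w)) := fun w => rfl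
      have T1 : ∀ u, T (u, 0, 0) = 0 := by
        intro u
        rw [hT, A1 _ ((m1 _).2 (by simp)), map_zero]
      have T2 : (T (0, 1, 0)).2 = 0 := by
        have := (m1 _).1 (A2 (L.symm (0, 1, 0)) ((m2 _).2 (by simp)))
        exact Prod.ext this.1 this.2
      have T3 : ∀ w, (T w).2.2 = 0 := fun w => (m2 _).1 (A3 _)
      refine ⟨((T (0, 1, 0)).1, fun j => (T (0, 0, Pi.single j 1)).2.1,
        Matrix.of fun i j => (T (0, 0, Pi.single j 1)).1 i), ?_⟩
      apply hext
      intro w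
      rw [hg, LinearEquiv.apply_symm_apply]
      apply L.injective
      rw [LinearEquiv.apply_symm_apply, ← hT]
      obtain ⟨u, c, y⟩ := w
      have hw : ((u, c, y) : (Fin k → F) × F × (Fin l → F)) =
          (u, 0, 0) + c • (0, 1, 0) + ∑ j, y j • (0, 0, Pi.single j 1) := by
        have hy : ((0, 0, y) : (Fin k → F) × F × (Fin l → F)) =
            ∑ j, y j • (0, 0, Pi.single j 1) := by
          refine Prod.ext ?_ (Prod.ext ?_ ?_)
          · simp [Prod.fst_sum]
          · simp [Prod.fst_sum, Prod.snd_sum]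
          · ext j
            simp [Prod.snd_sum, Finset.sum_apply, Pi.single_apply]
        rw [← hy]
        simp
      have hTw : T (u, c, y) = c • T (0, 1, 0) + ∑ j, y j • T (0, 0, Pi.single j 1) := by
        rw [hw]
        simp only [map_add, map_smul, map_sum, T1, zero_add]
      refine Prod.ext ?_ (Prod.ext ?_ ?_)
      · rw [hTw]
        ext i
        simp [Model.toLin, Matrix.mulVec, dotProduct, Prod.fst_sum, mul_comm]
      · rw [hTw]
        simp [Model.toLin, dotProduct, Prod.snd_sum, Prod.fst_sum, T2, mul_comm]
      · rw [T3]
        rfl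
  · intro x y
    apply hext
    intro w
    rw [← Matrix.mulVec_mulVec, hg, hg, hg]
    simp only [LinearEquiv.apply_symm_apply]
    congr 1
    refine Prod.ext ?_ (Prod.ext ?_ ?_)
    · ext i
      simp [Model.toLin, Model.prod, outer, Matrix.vecMulVec_mulVec]
    · simp [Model.toLin, Model.prod]
    · rfl

/-- Over an infinite field, any two 3-maximal nilpotent subsemigroups of signatures
`(k, 1, l)` and `(m, 1, p)` with `k, l, m, p > 1` are isomorphic. -/
theorem phiFlag_k1l_isomorphic_of_infinite {F : Type*} [Field F] [Infinite F]
    {k l m p : ℕ} (hk : 1 < k) (hl : 1 < l) (hm : 1 < m) (hp : 1 < p)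
    (V : Fin 4 → Submodule F (Fin (k + 1 + l) → F)) (hV : IsFlag V)
    (hVsig : flagSig V 0 = k ∧ flagSig V 1 = 1 ∧ flagSig V 2 = l)
    (V' : Fin 4 → Submodule F (Fin (m + 1 + p) → F)) (hV' : IsFlag V')
    (hV'sig : flagSig V' 0 = m ∧ flagSig V' 1 = 1 ∧ flagSig V' 2 = p) :
    ∃ f : Matrix (Fin (k + 1 + l)) (Fin (k + 1 + l)) F →
          Matrix (Fin (m + 1 + p)) (Fin (m + 1 + p)) F,
      Set.BijOn f (phiFlag V) (phiFlag V') ∧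
      ∀ a ∈ phiFlag V, ∀ b ∈ phiFlag V, f (a * b) = f a * f b := by
  obtain ⟨g, gi, gr, gm⟩ := exists_model V hV hVsig
  obtain ⟨g', gi', gr', gm'⟩ := exists_model V' hV' hV'sig
  obtain ⟨τ, hτ⟩ := exists_model_equiv F hk hl hm hp
  have hf : ∀ x, g' (τ (Function.invFun g (g x))) = g' (τ x) := fun x => by
    rw [Function.leftInverse_invFun gi]
  refine ⟨fun A => g' (τ (Function.invFun g A)), ⟨?_, ?_, ?_⟩, ?_⟩
  · rw [← gr, ← gr']
    rintro _ ⟨x, rfl⟩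
    exact ⟨_, rfl⟩
  · rw [← gr]
    rintro _ ⟨x, rfl⟩ _ ⟨y, rfl⟩ h
    simp only [hf] at h
    rw [τ.injective (gi' h)]
  · rw [← gr, ← gr']
    rintro _ ⟨y, rfl⟩
    exact ⟨g (τ.symm y), ⟨_, rfl⟩, by simp only [hf, Equiv.apply_symm_apply]⟩
  · rw [← gr]
    rintro _ ⟨x, rfl⟩ _ ⟨y, rfl⟩
    rw [← gm]
    simp only [hf]
    rw [hτ, gm']
end

section
/- Let F be a field, r ≥ 3, and let 𝓕₁ and 𝓕₂ be flags of length r in F^n with sig(𝓕₁) = (i_1, i_2, …, i_r) and sig(𝓕₂) = (j_1, j_2, …, j_r). If the semigroups φ(𝓕₁) and φ(𝓕₂) are isomorphic, then i_t = j_t for all t = 2, …, r−1. -/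
/-! ### Multiplicative invariants -/

/-- The `k`-th iterated left annihilator of `S`: the elements `a` of `S` with
`a * c₁ * ⋯ * c_k = 0` for all `c₁, …, c_k` in `S`. -/
def leftLayer {M : Type*} [MulZeroClass M] (S : Set M) : ℕ → Set M
  | 0 => {0}
  | k + 1 => {a | a ∈ S ∧ ∀ c ∈ S, a * c ∈ leftLayer S k}

/-- The `k`-th iterated right annihilator of `S`: the elements `a` of `S` with
`c_k * ⋯ * c₁ * a = 0` for all `c₁, …, c_k` in `S`. -/
def rightLayer {M : Type*} [MulZeroClass M] (S : Set M) : ℕ → Set M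
  | 0 => {0}
  | k + 1 => {a | a ∈ S ∧ ∀ c ∈ S, c * a ∈ rightLayer S k}

/-- There are `m` elements `A a` of `S` in its `k`-th left layer and `m` elements `B b` of `S` in its
`l`-th right layer such that `A a * B b` vanishes exactly off the diagonal. -/
def HasDualSystem {M : Type*} [MulZeroClass M] (S : Set M) (k l m : ℕ) : Prop :=
  ∃ A B : Fin m → M, (∀ a, A a ∈ S ∧ A a ∈ leftLayer S k) ∧
    (∀ a, B a ∈ S ∧ B a ∈ rightLayer S l) ∧ ∀ a b, A a * B b = 0 ↔ a ≠ b

section Transport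

variable {M : Type*} [SemigroupWithZero M] {S T : Set M} {f : M → M}

theorem map_zero_of_bijOn (hf : Set.BijOn f S T) (hS : (0 : M) ∈ S) (hT : (0 : M) ∈ T)
    (hm : ∀ a ∈ S, ∀ b ∈ S, f (a * b) = f a * f b) : f 0 = 0 := by
  obtain ⟨b, hb, hb0⟩ := hf.surjOn hT
  have h := hm 0 hS b hb
  rwa [zero_mul, hb0, mul_zero] at h

theorem map_mem_leftLayer (hf : Set.BijOn f S T) (hS : (0 : M) ∈ S) (hT : (0 : M) ∈ T)
    (hm : ∀ a ∈ S, ∀ b ∈ S, f (a * b) = f a * f b) (k : ℕ) :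
    ∀ a, a ∈ leftLayer S k → f a ∈ leftLayer T k := by
  induction k with
  | zero =>
    rintro a rfl
    exact map_zero_of_bijOn hf hS hT hm
  | succ k ih =>
    rintro a ⟨ha, h⟩
    refine ⟨hf.mapsTo ha, fun c hc => ?_⟩
    obtain ⟨d, hd, rfl⟩ := hf.surjOn hc
    rw [← hm a ha d hd]
    exact ih _ (h d hd)

theorem map_mem_rightLayer (hf : Set.BijOn f S T) (hS : (0 : M) ∈ S) (hT : (0 : M) ∈ T)
    (hm : ∀ a ∈ S, ∀ b ∈ S, f (a * b) = f a * f b) (k : ℕ) :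
    ∀ a, a ∈ rightLayer S k → f a ∈ rightLayer T k := by
  induction k with
  | zero =>
    rintro a rfl
    exact map_zero_of_bijOn hf hS hT hm
  | succ k ih =>
    rintro a ⟨ha, h⟩
    refine ⟨hf.mapsTo ha, fun c hc => ?_⟩
    obtain ⟨d, hd, rfl⟩ := hf.surjOn hc
    rw [← hm d hd a ha]
    exact ih _ (h d hd)

theorem HasDualSystem.map (hf : Set.BijOn f S T) (hS : (0 : M) ∈ S) (hT : (0 : M) ∈ T)
    (hmul : ∀ a ∈ S, ∀ b ∈ S, a * b ∈ S)
    (hm : ∀ a ∈ S, ∀ b ∈ S, f (a * b) = f a * f b) {k l m : ℕ} (h : HasDualSystem S k l m) :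
    HasDualSystem T k l m := by
  obtain ⟨A, B, hA, hB, hAB⟩ := h
  refine ⟨fun a => f (A a), fun b => f (B b),
    fun a => ⟨hf.mapsTo (hA a).1, map_mem_leftLayer hf hS hT hm k _ (hA a).2⟩,
    fun b => ⟨hf.mapsTo (hB b).1, map_mem_rightLayer hf hS hT hm l _ (hB b).2⟩, fun a b => ?_⟩
  have h0 := map_zero_of_bijOn hf hS hT hm
  rw [← hAB a b, ← hm _ (hA a).1 _ (hB b).1]
  nth_rw 1 [← h0]
  exact hf.injOn.eq_iff (hmul _ (hA a).1 _ (hB b).1) hS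

end Transport

/-! ### The semigroup of a flag -/

section Flag

variable {F : Type*} [Field F] {n r : ℕ} {V : Fin (r + 1) → Submodule F (Fin n → F)}

/-- The matrix of `v ↦ g v • w`. -/
noncomputable def rankOne (g : (Fin n → F) →ₗ[F] F) (w : Fin n → F) : Matrix (Fin n) (Fin n) F :=
  LinearMap.toMatrix' (g.smulRight w)

theorem rankOne_mulVec (g : (Fin n → F) →ₗ[F] F) (w v : Fin n → F) :
    (rankOne g w).mulVec v = g v • w := by
  simp [rankOne, LinearMap.toMatrix'_mulVec]

theorem eq_zero_of_mulVec {A : Matrix (Fin n) (Fin n) F} (h : ∀ v, A.mulVec v = 0) : A = 0 :=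
  Matrix.mulVec_injective (funext fun v => by simp [h v])

theorem zero_mem_phiFlag : (0 : Matrix (Fin n) (Fin n) F) ∈ phiFlag V := by
  intro i v _
  simp

theorem rankOne_mem_phiFlag_s15 (hV : IsFlag V) (s : Fin (r + 1)) {g : (Fin n → F) →ₗ[F] F}
    {w : Fin n → F} (hw : w ∈ V s) (hg : ∀ v ∈ V s, g v = 0) : rankOne g w ∈ phiFlag V := by
  intro i v hv
  rw [rankOne_mulVec]
  rcases le_or_gt i.succ s with h | h
  · rw [hg v (hV.2.2.monotone h hv), zero_smul]
    exact zero_mem _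
  · exact Submodule.smul_mem _ _ (hV.2.2.monotone (Fin.le_castSucc_iff.2 h) hw)

theorem mulVec_mem_of_mem_phiFlag (hV : IsFlag V) {A : Matrix (Fin n) (Fin n) F}
    (hA : A ∈ phiFlag V) (i : Fin (r + 1)) {v : Fin n → F} (hv : v ∈ V i) : A.mulVec v ∈ V i := by
  induction i using Fin.cases with
  | zero =>
    rw [hV.1, Submodule.mem_bot] at hv ⊢
    simp [hv]
  | succ i => exact hV.2.2.monotone (Fin.castSucc_lt_succ).le (hA i v hv)

theorem mul_mem_phiFlag (hV : IsFlag V) {A B : Matrix (Fin n) (Fin n) F}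
    (hA : A ∈ phiFlag V) (hB : B ∈ phiFlag V) : A * B ∈ phiFlag V := by
  intro i v hv
  rw [← Matrix.mulVec_mulVec]
  exact mulVec_mem_of_mem_phiFlag hV hA _ (hB i v hv)

theorem mem_leftLayer_iff (hV : IsFlag V) (i : Fin (r + 1)) :
    ∀ A, A ∈ leftLayer (phiFlag V) (r - i.val) ↔
      A ∈ phiFlag V ∧ ∀ v ∈ V i, A.mulVec v = 0 := by
  induction i using Fin.reverseInduction with
  | last =>
    intro A
    simp only [Fin.val_last, Nat.sub_self, leftLayer, Set.mem_singleton_iff, hV.2.1,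
      Submodule.mem_top, forall_const]
    constructor
    · rintro rfl
      exact ⟨zero_mem_phiFlag, fun v => by simp⟩
    · exact fun h => eq_zero_of_mulVec h.2
  | cast i ih =>
    intro A
    have hi : r - (i.castSucc).val = (r - (i.succ).val) + 1 := by
      simp only [Fin.val_castSucc, Fin.val_succ]
      omega
    rw [hi]
    simp only [leftLayer, Set.mem_ofPred_eq]
    refine and_congr_right fun hA => ⟨fun h w hw => ?_, fun h C hC => ?_⟩
    -- `w` is, up to a nonzero scalar, `C v` for a rank-one `C` in `φ(𝓕)` and some `v ∈ V_{i+1}`.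
    · obtain ⟨v, hv, hv'⟩ := SetLike.exists_of_lt (hV.2.2 (Fin.castSucc_lt_succ (i := i)))
      obtain ⟨g, hg, hgV⟩ := Submodule.exists_le_ker_of_notMem hv'
      have h1 := ((ih _).1 (h _ (rankOne_mem_phiFlag_s15 hV i.castSucc hw fun x hx => hgV hx))).2 v hv
      rw [← Matrix.mulVec_mulVec, rankOne_mulVec, Matrix.mulVec_smul] at h1
      exact (smul_eq_zero.1 h1).resolve_left hg
    · refine (ih _).2 ⟨mul_mem_phiFlag hV hA hC, fun v hv => ?_⟩
      rw [← Matrix.mulVec_mulVec]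
      exact h _ (hC i v hv)

theorem mem_rightLayer_iff (hV : IsFlag V) (i : Fin (r + 1)) :
    ∀ B, B ∈ rightLayer (phiFlag V) i.val ↔ B ∈ phiFlag V ∧ ∀ v, B.mulVec v ∈ V i := by
  induction i using Fin.induction with
  | zero =>
    intro B
    simp only [Fin.val_zero, rightLayer, Set.mem_singleton_iff, hV.1, Submodule.mem_bot]
    constructor
    · rintro rfl
      exact ⟨zero_mem_phiFlag, fun v => by simp⟩
    · exact fun h => eq_zero_of_mulVec h.2
  | succ i ih =>
    intro B
    rw [Fin.val_castSucc] at ih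
    rw [Fin.val_succ]
    simp only [rightLayer, Set.mem_ofPred_eq]
    refine and_congr_right fun hB => ⟨fun h v => ?_, fun h C hC => ?_⟩
    -- A vector outside `V_{i+1}` is moved outside `V_i` by some rank-one element of `φ(𝓕)`.
    · by_contra hv
      obtain ⟨g, hg, hgV⟩ := Submodule.exists_le_ker_of_notMem hv
      obtain ⟨w, hw, hw'⟩ := SetLike.exists_of_lt (hV.2.2 (Fin.castSucc_lt_succ (i := i)))
      have h1 := ((ih _).1 (h _ (rankOne_mem_phiFlag_s15 hV i.succ hw fun x hx => hgV hx))).2 v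
      rw [← Matrix.mulVec_mulVec, rankOne_mulVec] at h1
      exact hw' ((Submodule.smul_mem_iff _ hg).1 h1)
    · refine (ih _).2 ⟨mul_mem_phiFlag hV hC hB, fun v => ?_⟩
      rw [← Matrix.mulVec_mulVec]
      exact hC i _ (h v)

theorem flagSig_eq_finrank_quotient (hV : IsFlag V) (t : Fin r) :
    flagSig V t =
      Module.finrank F (V t.succ ⧸ (V t.castSucc).submoduleOf (V t.succ)) := by
  have h := Submodule.finrank_quotient_add_finrank ((V t.castSucc).submoduleOf (V t.succ))
  rw [(Submodule.submoduleOfEquivOfLe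
    (hV.2.2 (Fin.castSucc_lt_succ (i := t))).le).finrank_eq] at h
  unfold flagSig
  omega

theorem le_flagSig_of_hasDualSystem (hV : IsFlag V) (t : Fin r) {m : ℕ}
    (h : HasDualSystem (phiFlag V) (r - t.val) (t.val + 1) m) : m ≤ flagSig V t := by
  obtain ⟨A, B, hA, hB, hAB⟩ := h
  replace hA := fun a => ((mem_leftLayer_iff hV t.castSucc _).1 (hA a).2).2
  replace hB := fun b => ((mem_rightLayer_iff hV t.succ _).1 (hB b).2).2
  have hx : ∀ a, ∃ x, (A a * B a).mulVec x ≠ 0 := by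
    intro a
    by_contra! hc
    exact (hAB a a).1 (eq_zero_of_mulVec hc) rfl
  choose x hx using hx
  have hli : LinearIndependent F fun a =>
      ((V t.castSucc).submoduleOf (V t.succ)).mkQ ⟨(B a).mulVec (x a), hB a _⟩ := by
    rw [Fintype.linearIndependent_iff]
    intro c hc a
    simp only [← map_smul, ← map_sum] at hc
    rw [Submodule.mkQ_apply, Submodule.Quotient.mk_eq_zero] at hc
    have h1 := hA a _ (Submodule.mem_comap.1 hc)
    simp only [map_sum, map_smul, Submodule.subtype_apply, Matrix.mulVec_sum,
      Matrix.mulVec_smul, Matrix.mulVec_mulVec] at h1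
    rw [Finset.sum_eq_single a] at h1
    · exact (smul_eq_zero.1 h1).resolve_right (hx a)
    · intro b _ hb
      rw [(hAB a b).2 hb.symm, Matrix.zero_mulVec, smul_zero]
    · simp
  simpa [flagSig_eq_finrank_quotient hV] using hli.fintype_card_le_finrank

theorem hasDualSystem_flagSig (hV : IsFlag V) (t : Fin r) (h0 : t.val ≠ 0) (h1 : t.val ≠ r - 1) :
    HasDualSystem (phiFlag V) (r - t.val) (t.val + 1) (flagSig V t) := by
  rw [flagSig_eq_finrank_quotient hV]
  let b := Module.finBasis F (V t.succ ⧸ (V t.castSucc).submoduleOf (V t.succ))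
  obtain ⟨u, hu, hu0⟩ : ∃ u ∈ V t.castSucc, u ≠ 0 := by
    refine Submodule.exists_mem_ne_zero_of_ne_bot ?_
    rw [← hV.1]
    exact hV.2.2.injective.ne fun h => h0 (by simpa using congrArg Fin.val h)
  obtain ⟨y, hy⟩ : ∃ y, y ∉ V t.succ := by
    by_contra! hc
    have h2 : V t.succ = V (Fin.last r) := by rw [hV.2.1, eq_top_iff]; exact fun z _ => hc z
    have h3 := congrArg Fin.val (hV.2.2.injective h2)
    simp only [Fin.val_succ, Fin.val_last] at h3
    omega
  obtain ⟨p, hp, hpV⟩ := Submodule.exists_le_ker_of_notMem hy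
  choose e he using fun a => Submodule.mkQ_surjective _ (b a)
  choose g hg using fun a => LinearMap.exists_extend
    ((b.coord a).comp ((V t.castSucc).submoduleOf (V t.succ)).mkQ)
  have hg' : ∀ a (v : V t.succ), g a v = b.coord a (Submodule.mkQ _ v) :=
    fun a v => LinearMap.congr_fun (hg a) v
  have hgV : ∀ a, ∀ v ∈ V t.castSucc, g a v = 0 := by
    intro a v hv
    have hv' : v ∈ V t.succ := hV.2.2.monotone (Fin.castSucc_lt_succ).le hv
    have hq : ((V t.castSucc).submoduleOf (V t.succ)).mkQ ⟨v, hv'⟩ = 0 :=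
      (Submodule.Quotient.mk_eq_zero _).2 (Submodule.mem_comap.2 hv)
    rw [hg' a ⟨v, hv'⟩, hq, map_zero]
  have hA : ∀ a, rankOne (g a) u ∈ phiFlag V := fun a => rankOne_mem_phiFlag_s15 hV _ hu (hgV a)
  have hB : ∀ a, rankOne p (e a : Fin n → F) ∈ phiFlag V :=
    fun a => rankOne_mem_phiFlag_s15 hV _ (e a).2 fun v hv => hpV hv
  refine ⟨fun a => rankOne (g a) u, fun a => rankOne p (e a : Fin n → F),
    fun a => ⟨hA a, (mem_leftLayer_iff hV t.castSucc _).2 ⟨hA a, fun v hv => ?_⟩⟩,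
    fun a => ⟨hB a, (mem_rightLayer_iff hV t.succ _).2 ⟨hB a, fun v => ?_⟩⟩, fun a c => ?_⟩
  · rw [rankOne_mulVec, hgV a v hv, zero_smul]
  · rw [rankOne_mulVec]
    exact Submodule.smul_mem _ _ (e a).2
  · have hval : ∀ v, (rankOne (g a) u * rankOne p (e c : Fin n → F)).mulVec v =
        p v • (if c = a then (1 : F) else 0) • u := by
      intro v
      rw [← Matrix.mulVec_mulVec, rankOne_mulVec p, Matrix.mulVec_smul, rankOne_mulVec, hg', he,
        Module.Basis.coord_apply, b.repr_self, Finsupp.single_apply]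
    constructor
    · rintro h rfl
      have h2 := hval y
      rw [h, Matrix.zero_mulVec, if_pos rfl, one_smul] at h2
      exact (smul_ne_zero hp hu0) h2.symm
    · intro h
      refine eq_zero_of_mulVec fun v => ?_
      rw [hval, if_neg h.symm, zero_smul, smul_zero]

/-- An isomorphism transports the dual system of size `flagSig V t` to `φ(V')`, which bounds
`flagSig V' t` from below. -/
theorem flagSig_le_of_isomorphic {V' : Fin (r + 1) → Submodule F (Fin n → F)} (hV : IsFlag V)
    (hV' : IsFlag V') {f : Matrix (Fin n) (Fin n) F → Matrix (Fin n) (Fin n) F}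
    (hf : Set.BijOn f (phiFlag V) (phiFlag V'))
    (hm : ∀ a ∈ phiFlag V, ∀ b ∈ phiFlag V, f (a * b) = f a * f b)
    (t : Fin r) (h0 : t.val ≠ 0) (h1 : t.val ≠ r - 1) : flagSig V t ≤ flagSig V' t :=
  le_flagSig_of_hasDualSystem hV' t <|
    (hasDualSystem_flagSig hV t h0 h1).map hf zero_mem_phiFlag zero_mem_phiFlag
      (fun _ ha _ hb => mul_mem_phiFlag hV ha hb) hm

end Flag

/-- If two `r`-maximal nilpotent subsemigroups `φ(𝓕₁)`, `φ(𝓕₂)` of `M(n,F)` (with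
`r ≥ 3`) are isomorphic, then the signatures of `𝓕₁` and `𝓕₂` agree in all entries
except possibly the first and the last one. -/
theorem sig_middle_entries_eq_of_isomorphic {F : Type*} [Field F] {n r : ℕ} (hr : 3 ≤ r)
    (V : Fin (r + 1) → Submodule F (Fin n → F)) (hV : IsFlag V)
    (V' : Fin (r + 1) → Submodule F (Fin n → F)) (hV' : IsFlag V')
    (hiso : ∃ f : Matrix (Fin n) (Fin n) F → Matrix (Fin n) (Fin n) F,
      Set.BijOn f (phiFlag V) (phiFlag V') ∧
      ∀ a ∈ phiFlag V, ∀ b ∈ phiFlag V, f (a * b) = f a * f b) :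
    ∀ t : Fin r, t.val ≠ 0 → t.val ≠ r - 1 → flagSig V t = flagSig V' t := by
  obtain ⟨f, hf, hm⟩ := hiso
  intro t h0 h1
  refine le_antisymm (flagSig_le_of_isomorphic hV hV' hf hm t h0 h1) ?_
  have hinv := hf.invOn_invFunOn
  have hf' := hf.symm hinv.symm
  refine flagSig_le_of_isomorphic hV' hV hf' (fun a ha b hb => ?_) t h0 h1
  have ha' := hf'.mapsTo ha
  have hb' := hf'.mapsTo hb
  refine hf.injOn (hf'.mapsTo (mul_mem_phiFlag hV' ha hb)) (mul_mem_phiFlag hV ha' hb') ?_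
  rw [hm _ ha' _ hb', hinv.2 ha, hinv.2 hb, hinv.2 (mul_mem_phiFlag hV' ha hb)]
end

section
/- Let V and V' be finite-dimensional vector spaces over a field F. If the poset of all subspaces of V of dimension at most 2 (ordered by inclusion) is order-isomorphic to the poset of all subspaces of V' of dimension at most 2 (ordered by inclusion), then dim V = dim V'. -/
/-!
The dimension is the least number of points that generate the whole space by repeatedly passing to
lines through two points, and this is visible in the poset of subspaces of dimension at most `2`.

Order isomorphisms preserve the subspaces of dimension at most `1`
(`LowDim.finrank_apply_le_one`), so an isomorphism `e` induces a map `f : V → V'` with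
`e ⟨v⟩ = ⟨f v⟩`. The join of two such subspaces exists in the poset and is the usual sum, whence
`e ⟨v, w⟩ = ⟨f v, f w⟩`. If `b` is a basis of `V` and `S` is the span of the vectors `f (b i)`, then
`{v | f v ∈ S}` is therefore a subspace; it contains `b`, so it is all of `V`. Since every one-dimensional subspace of
`V'` is some `⟨f v⟩`, it follows that `S = V'`, so `dim V' ≤ dim V` (`LowDim.finrank_le`). The other
inequality comes from the inverse of `e`.
-/

namespace LowDim

open Module Submodule

/-- The poset of subspaces of `V` of dimension at most `2`. -/
abbrev Sub (F V : Type*) [Field F] [AddCommGroup V] [Module F V] :=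
  {W : Submodule F V // finrank F W ≤ 2}

variable {F V V' : Type*} [Field F] [AddCommGroup V] [Module F V] [AddCommGroup V'] [Module F V']

/-- The subspace spanned by two (possibly dependent) vectors. -/
def pair (v w : V) : Sub F V :=
  ⟨span F {v, w}, by
    classical
    have h := finrank_span_finset_le_card (R := F) ({v, w} : Finset V)
    have h2 := Finset.card_le_two (a := v) (b := w)
    rw [Finset.coe_pair] at h
    exact h.trans h2⟩

theorem finrank_span_singleton_le (v : V) : finrank F (span F {v}) ≤ 1 := by
  simpa using finrank_span_le_card (R := F) ({v} : Set V)

/-- The subspace spanned by one (possibly zero) vector. -/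
def single (v : V) : Sub F V :=
  ⟨span F {v}, (finrank_span_singleton_le v).trans one_le_two⟩

theorem single_le_iff {v : V} {X : Sub F V} : single v ≤ X ↔ v ∈ X.1 :=
  span_singleton_le_iff_mem v X.1

theorem pair_le_iff {v w : V} {X : Sub F V} : pair v w ≤ X ↔ v ∈ X.1 ∧ w ∈ X.1 := by
  change span F {v, w} ≤ X.1 ↔ _
  rw [span_le, Set.insert_subset_iff, Set.singleton_subset_iff]
  rfl

theorem exists_eq_single [FiniteDimensional F V] {X : Sub F V} (hX : finrank F X.1 ≤ 1) :
    ∃ v, X = single v := by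
  obtain ⟨v, hv⟩ := ((finrank_le_one_iff_isPrincipal X.1).1 hX).principal
  exact ⟨v, Subtype.ext hv⟩

/-- A subspace of dimension `2` is the top of a chain of length `2`; pulling the chain back along
`e` shows that only subspaces of dimension at least `2` are mapped to it. -/
theorem finrank_apply_le_one [FiniteDimensional F V] [FiniteDimensional F V']
    (e : Sub F V ≃o Sub F V') {X : Sub F V} (hX : finrank F X.1 ≤ 1) :
    finrank F (e X).1 ≤ 1 := by
  by_contra! hlt
  have hne : (e X).1 ≠ ⊥ := by
    intro h
    rw [h, finrank_bot] at hlt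
    omega
  obtain ⟨u, hu, hu0⟩ := exists_mem_ne_zero_of_ne_bot hne
  have h1 : single (F := F) u < e X := by
    refine lt_of_le_of_ne (single_le_iff.2 hu) fun h => ?_
    rw [← h] at hlt
    exact absurd (finrank_span_singleton_le (F := F) u) (not_le.2 hlt)
  have h0 : single (F := F) (0 : V') < single u := by
    refine lt_of_le_of_ne (single_le_iff.2 (zero_mem _)) fun h => hu0 ?_
    have : u ∈ (single (F := F) (0 : V')).1 := h ▸ mem_span_singleton_self u
    simpa [single] using this
  have h1' : e.symm (single u) < X := by simpa using e.symm.strictMono h1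
  have h0' := e.symm.strictMono h0
  have l1 := finrank_lt_finrank_of_lt (Subtype.coe_lt_coe.2 h1')
  have l0 := finrank_lt_finrank_of_lt (Subtype.coe_lt_coe.2 h0')
  omega

theorem finrank_le [FiniteDimensional F V] [FiniteDimensional F V']
    (e : Sub F V ≃o Sub F V') : finrank F V' ≤ finrank F V := by
  have hf (v : V) : ∃ v' : V', e (single v) = single v' :=
    exists_eq_single (finrank_apply_le_one e (finrank_span_singleton_le v))
  choose f hf using hf
  have hsurj (v' : V') : ∃ v : V, single (F := F) (f v) = single v' := by
    obtain ⟨v, hv⟩ := exists_eq_single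
      (finrank_apply_le_one e.symm (X := single v') (finrank_span_singleton_le v'))
    exact ⟨v, by rw [← hf, ← hv, e.apply_symm_apply]⟩
  have hpair {v w x : V} (hx : x ∈ span F {v, w}) : f x ∈ span F {f v, f w} := by
    have hle : pair v w ≤ e.symm (pair (f v) (f w)) := by
      refine pair_le_iff.2 ⟨single_le_iff.1 ?_, single_le_iff.1 ?_⟩ <;>
        rw [e.le_symm_apply, hf, single_le_iff]
      · exact mem_span_of_mem (by simp)
      · exact mem_span_of_mem (by simp)
    have hx' : single x ≤ pair v w := single_le_iff.2 hx
    have := e.le_symm_apply.1 (hx'.trans hle)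
    rw [hf] at this
    exact single_le_iff.1 this
  let b := finBasis F V
  let S : Submodule F V' := span F (Set.range (f ∘ b))
  have hS {v w x : V} (hv : f v ∈ S) (hw : f w ∈ S) (hx : x ∈ span F {v, w}) : f x ∈ S := by
    refine span_le.2 ?_ (hpair hx)
    rintro _ (rfl | rfl)
    exacts [hv, hw]
  have hf0 : f 0 ∈ S := by
    obtain ⟨v, hv⟩ := hsurj 0
    have h : single (F := F) (f 0) ≤ single (f v) := by
      rw [← hf, ← hf]
      exact e.monotone (single_le_iff.2 (zero_mem _))
    rw [hv] at h
    have h0 : f 0 = 0 := by simpa [single] using single_le_iff.1 h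
    rw [h0]
    exact zero_mem S
  let U : Submodule F V :=
    { carrier := {v | f v ∈ S}
      zero_mem' := hf0
      add_mem' := fun {v w} hv hw => hS hv hw
        (add_mem (mem_span_of_mem (by simp)) (mem_span_of_mem (by simp)))
      smul_mem' := fun c v hv => hS hv hv (smul_mem _ c (mem_span_of_mem (by simp))) }
  have hU : U = ⊤ := by
    rw [eq_top_iff, ← b.span_eq, span_le]
    rintro _ ⟨i, rfl⟩
    exact mem_span_of_mem (Set.mem_range_self i)
  have hStop : S = ⊤ := by
    refine eq_top_iff.2 fun v' _ => ?_
    obtain ⟨v, hv⟩ := hsurj v'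
    have hvU : v ∈ U := hU ▸ mem_top
    have hv' : v' ∈ span F {f v} := single_le_iff.1 hv.ge
    exact (span_singleton_le_iff_mem (f v) S).2 hvU hv'
  calc finrank F V' = finrank F S := by rw [hStop, finrank_top]
    _ ≤ Fintype.card (Fin (finrank F V)) := finrank_range_le_card (R := F) (f ∘ b)
    _ = finrank F V := Fintype.card_fin _

end LowDim

/-- If the posets (ordered by inclusion) of subspaces of dimension at most 2 of two
finite-dimensional vector spaces `V` and `V'` are order-isomorphic, then
`dim V = dim V'`. -/
theorem finrank_eq_of_low_dim_subspace_poset_orderIso {F V V' : Type*} [Field F]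
    [AddCommGroup V] [Module F V] [AddCommGroup V'] [Module F V']
    [FiniteDimensional F V] [FiniteDimensional F V']
    (h : Nonempty ({W : Submodule F V // Module.finrank F W ≤ 2} ≃o
                   {W : Submodule F V' // Module.finrank F W ≤ 2})) :
    Module.finrank F V = Module.finrank F V' := by
  obtain ⟨e⟩ := h
  exact le_antisymm (LowDim.finrank_le e.symm) (LowDim.finrank_le e)
end

section
/- Let F be a field, n ≥ 2, and let k be an integer with 1 ≤ k ≤ n−1. Then every matrix A ∈ M(n,F) with rank(A) ≤ k can be written as a product of finitely many (at least one) matrices from M(n,F), each of rank exactly k. -/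
/-!
Every matrix is equivalent to a diagonal one: `A = P * D * Q` with `P`, `Q` products of
transvections. If `rank A = r < k ≤ n - 1`, then the diagonal of `D` vanishes at two distinct
indices `i` and `j`. Putting a `1` at position `i` of `D` gives a diagonal matrix `D₁` of rank
`r + 1`; the `0`-`1` diagonal matrix `D₂` supported on the support of `D` together with `j` also
has rank `r + 1`, and `D = D₁ * D₂`. Hence `A = (P * D₁) * (D₂ * Q)` is a product of two matrices
of rank `r + 1`, and induction on `k - r` finishes the proof.
-/

/-- The factorization step: the gap `r + 2 ≤ n` leaves two zeros on the diagonal form of `A`. -/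
theorem exists_mul_of_rank_add_two_le {F : Type*} [Field F] {n : ℕ}
    (A : Matrix (Fin n) (Fin n) F) (hA : A.rank + 2 ≤ n) :
    ∃ B C : Matrix (Fin n) (Fin n) F,
      B.rank = A.rank + 1 ∧ C.rank = A.rank + 1 ∧ A = B * C := by
  classical
  obtain ⟨L, L', d, h⟩ := Matrix.Pivot.exists_list_transvec_mul_diagonal_mul_list_transvec A
  set P := (L.map Matrix.TransvectionStruct.toMatrix).prod with hP
  set Q := (L'.map Matrix.TransvectionStruct.toMatrix).prod with hQ
  have hPu : IsUnit P.det := by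
    rw [hP, Matrix.TransvectionStruct.det_toMatrix_prod]; exact isUnit_one
  have hQu : IsUnit Q.det := by
    rw [hQ, Matrix.TransvectionStruct.det_toMatrix_prod]; exact isUnit_one
  have hrank (w : Fin n → F) :
      (Matrix.diagonal w).rank = (Finset.univ.filter (fun x => w x ≠ 0)).card := by
    rw [Matrix.rank_diagonal, Fintype.card_subtype]
  set S := Finset.univ.filter (fun x => d x ≠ 0) with hS
  have hr : A.rank = S.card := by
    rw [h, Matrix.rank_mul_eq_left_of_isUnit_det _ _ hQu,
      Matrix.rank_mul_eq_right_of_isUnit_det _ _ hPu, hrank]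
  have hc : 1 < Sᶜ.card := by
    rw [Finset.card_compl, Fintype.card_fin]; omega
  obtain ⟨i, hi, j, hj, hij⟩ := Finset.one_lt_card.mp hc
  rw [Finset.mem_compl] at hi hj
  have hdi : d i = 0 := by simpa [hS] using hi
  have hdj : d j = 0 := by simpa [hS] using hj
  refine ⟨P * Matrix.diagonal (Function.update d i 1),
    Matrix.diagonal (fun x => if x ∈ insert j S then 1 else 0) * Q, ?_, ?_, ?_⟩
  · rw [Matrix.rank_mul_eq_right_of_isUnit_det _ _ hPu, hrank, hr,
      ← Finset.card_insert_of_notMem hi]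
    congr 1
    ext x
    by_cases hx : x = i <;> simp [hS, hx]
  · rw [Matrix.rank_mul_eq_left_of_isUnit_det _ _ hQu, hrank, hr,
      ← Finset.card_insert_of_notMem hj]
    congr 1
    ext x
    simp [or_iff_not_imp_left]
  · rw [h, Matrix.mul_assoc P, Matrix.mul_assoc P, ← Matrix.mul_assoc (Matrix.diagonal _) _ Q,
      Matrix.diagonal_mul_diagonal]
    congr 3
    ext x
    by_cases hx : x = i
    · subst hx
      simp [hdi, hi, hij]
    · by_cases hd : d x = 0 <;> by_cases hxj : x = j <;> simp_all

/-- For `1 ≤ k ≤ n - 1`, every matrix in `M(n,F)` of rank at most `k` is a product of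
finitely many (at least one) matrices of rank exactly `k`; i.e. the ideal `I_k`
is generated as a semigroup by the rank-`k` matrices. -/
theorem rank_le_eq_prod_of_rank_eq {F : Type*} [Field F] {n k : ℕ}
    (hn : 2 ≤ n) (hk1 : 1 ≤ k) (hk2 : k ≤ n - 1)
    (A : Matrix (Fin n) (Fin n) F) (hA : A.rank ≤ k) :
    ∃ l : List (Matrix (Fin n) (Fin n) F),
      l ≠ [] ∧ (∀ B ∈ l, B.rank = k) ∧ A = l.prod := by
  obtain ⟨m, hm⟩ := Nat.exists_eq_add_of_le hA
  induction m generalizing A with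
  | zero => exact ⟨[A], by simp, by simp [hm], by simp⟩
  | succ m ih =>
    obtain ⟨B, C, hB, hC, rfl⟩ := exists_mul_of_rank_add_two_le A (by omega)
    obtain ⟨l₁, h₁, h₁', hl₁⟩ := ih B (by omega) (by omega)
    obtain ⟨l₂, h₂, h₂', hl₂⟩ := ih C (by omega) (by omega)
    refine ⟨l₁ ++ l₂, by simp [h₁], fun M hM => ?_, by rw [List.prod_append, ← hl₁, ← hl₂]⟩
    rcases List.mem_append.mp hM with hM | hM
    · exact h₁' M hM
    · exact h₂' M hM
end

section
/- Let F be a finite field and n ≥ 1. A nonempty subsemigroup T of M(n,F) is completely isolated if and only if T is one of the following three subsemigroups: T = M(n,F); T = GL(n,F), the set of all invertible matrices; or T = M(n,F) ∖ GL(n,F), the set of all non-invertible matrices. -/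
/-!
Complete isolation of `T` says exactly that the complement of `T` is also closed under
multiplication, so the matrix monoid is split into two multiplicatively closed classes. Let `U` be
the class that contains `1` and `V` the other one. A unit `g` has finite order, so some power of `g`
is `1`; hence `g ∈ U` (`unit_mem`). It follows that `U` and `V` are both stable under multiplication
by units on either side.

If such a class contains a singular matrix `A`, it contains `0` (`zero_mem_of_singular`): `A` is
equivalent to a diagonal matrix with a zero on the diagonal, simultaneous permutations of rows and
columns move this zero to any diagonal position, and the product of all the diagonal matrices thus
obtained is `0`. As `0` lies in only one of the classes, all singular matrices lie in the same
class, so `V` is either empty or the set of all singular matrices.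
-/

open Matrix in
/-- A multiplicatively closed set of matrices that is stable under multiplication by units and
contains a singular matrix also contains `0`. -/
lemma zero_mem_of_singular {F : Type*} [Field F] {n : ℕ}
    (S : Set (Matrix (Fin n) (Fin n) F))
    (hmul : ∀ a ∈ S, ∀ b ∈ S, a * b ∈ S)
    (hl : ∀ g, IsUnit g → ∀ a ∈ S, g * a ∈ S)
    (hr : ∀ g, IsUnit g → ∀ a ∈ S, a * g ∈ S)
    (A : Matrix (Fin n) (Fin n) F) (hA : A ∈ S) (hAu : ¬ IsUnit A) : (0 : Matrix _ _ F) ∈ S := by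
  obtain ⟨L, L', D, hD⟩ := Matrix.Pivot.exists_list_transvec_mul_mul_list_transvec_eq_diagonal A
  have hLu : ∀ L : List (TransvectionStruct (Fin n) F),
      IsUnit (L.map TransvectionStruct.toMatrix).prod := fun L => by
    rw [Matrix.isUnit_iff_isUnit_det, TransvectionStruct.det_toMatrix_prod]
    exact isUnit_one
  have hDS : diagonal D ∈ S := by
    rw [← hD]
    exact hr _ (hLu _) _ (hl _ (hLu _) _ hA)
  obtain ⟨i, hi⟩ : ∃ i, D i = 0 := by
    by_contra! h
    apply hAu
    have h1 : (diagonal D).det ≠ 0 := by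
      rw [det_diagonal]
      exact Finset.prod_ne_zero_iff.mpr fun i _ => h i
    rw [← hD, det_mul, det_mul, TransvectionStruct.det_toMatrix_prod,
      TransvectionStruct.det_toMatrix_prod, one_mul, mul_one] at h1
    rw [Matrix.isUnit_iff_isUnit_det]
    exact h1.isUnit
  have hperm : ∀ σ : Equiv.Perm (Fin n), IsUnit (σ.permMatrix F) := fun σ => by
    rw [Matrix.isUnit_iff_isUnit_det, det_permutation]
    exact (Equiv.Perm.sign σ).isUnit.map (Int.castRingHom F)
  have hconj : ∀ σ : Equiv.Perm (Fin n), diagonal (fun j => D (σ j)) ∈ S := fun σ => by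
    have h : σ.permMatrix F * diagonal D * (σ⁻¹).permMatrix F = diagonal (fun j => D (σ j)) := by
      rw [PEquiv.toMatrix_toPEquiv_mul, PEquiv.mul_toMatrix_toPEquiv]
      ext a b
      simp [diagonal_apply, show (Equiv.symm σ⁻¹) b = σ b from rfl]
    rw [← h]
    exact hr _ (hperm _) _ (hl _ (hperm _) _ hDS)
  have hprod : ∀ s : Finset (Fin n), s.Nonempty →
      diagonal (fun j => ∏ k ∈ s, D (Equiv.swap k i j)) ∈ S := fun s hs => by
    induction hs using Finset.Nonempty.cons_induction with
    | singleton a => simpa using hconj (Equiv.swap a i)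
    | cons a s has hs ih =>
      have := hmul _ (hconj (Equiv.swap a i)) _ ih
      rw [diagonal_mul_diagonal] at this
      simpa only [Finset.prod_cons] using this
  have h0 := hprod Finset.univ ⟨i, Finset.mem_univ i⟩
  have : (fun j => ∏ k, D (Equiv.swap k i j)) = 0 := by
    funext j
    -- The factor `k = j` is `D i = 0`.
    exact Finset.prod_eq_zero (Finset.mem_univ j) (by simpa using hi)
  rw [this] at h0
  simpa using h0

/-- If a set and its complement are both multiplicatively closed, every unit of a finite monoid lies
on the same side as `1`, since one of its powers is `1`. -/
lemma unit_mem {M : Type*} [Monoid M] [Finite M] (U : Set M)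
    (hV : ∀ a ∉ U, ∀ b ∉ U, a * b ∉ U) (h1 : (1 : M) ∈ U) (g : M) (hg : IsUnit g) : g ∈ U := by
  obtain ⟨u, rfl⟩ := hg
  by_contra h
  have hp : ∀ k : ℕ, (u : M) ^ (k + 1) ∉ U := fun k => by
    induction k with
    | zero => simpa using h
    | succ k ih => rw [pow_succ]; exact hV _ ih _ h
  have hk : 0 < orderOf u := orderOf_pos u
  apply hp (orderOf u - 1)
  rw [Nat.sub_add_cancel hk, ← Units.val_pow_eq_pow_val, pow_orderOf_eq_one]
  exact h1

/-- The class containing `1`, in a partition of the matrix monoid into two multiplicatively closed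
classes (the second possibly empty), is the whole monoid or the group of units. -/
lemma eq_univ_or_units {F : Type*} [Field F] [Finite F] {n : ℕ}
    (U : Set (Matrix (Fin n) (Fin n) F))
    (hU : ∀ a ∈ U, ∀ b ∈ U, a * b ∈ U) (hV : ∀ a ∉ U, ∀ b ∉ U, a * b ∉ U)
    (h1 : (1 : Matrix (Fin n) (Fin n) F) ∈ U) :
    U = Set.univ ∨ U = {A : Matrix (Fin n) (Fin n) F | IsUnit A} := by
  have hu := unit_mem U hV h1
  by_contra! h
  obtain ⟨hne, hne'⟩ := h
  obtain ⟨B, hB⟩ := (Set.ne_univ_iff_exists_notMem U).mp hne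
  obtain ⟨A, hA, hAu⟩ : ∃ A ∈ U, ¬ IsUnit A := by
    by_contra! hc
    exact hne' (Set.Subset.antisymm hc hu)
  have h0 := zero_mem_of_singular U hU (fun g hg a ha => hU g (hu g hg) a ha)
    (fun g hg a ha => hU a ha g (hu g hg)) A hA hAu
  refine zero_mem_of_singular Uᶜ hV ?_ ?_ B hB (fun hBu => hB (hu B hBu)) h0
  · rintro _ ⟨g, rfl⟩ a ha hga
    apply ha
    simpa using hU _ (hu _ g⁻¹.isUnit) _ hga
  · rintro _ ⟨g, rfl⟩ a ha hga
    apply ha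
    simpa [mul_assoc] using hU _ hga _ (hu _ g⁻¹.isUnit)

/-- Over a finite field, a nonempty subsemigroup `T` of `M(n,F)` is completely isolated
(for all `x, y`, `x*y ∈ T` implies `x ∈ T` or `y ∈ T`) if and only if `T` is `M(n,F)`,
`GL(n,F)`, or `M(n,F) ∖ GL(n,F)`. -/
theorem completely_isolated_iff {F : Type*} [Field F] [Finite F] {n : ℕ} (hn : 1 ≤ n)
    (T : Set (Matrix (Fin n) (Fin n) F)) (hne : T.Nonempty)
    (hmul : ∀ a ∈ T, ∀ b ∈ T, a * b ∈ T) :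
    (∀ x y : Matrix (Fin n) (Fin n) F, x * y ∈ T → x ∈ T ∨ y ∈ T) ↔
      (T = Set.univ ∨ T = {A : Matrix (Fin n) (Fin n) F | IsUnit A} ∨
        T = {A : Matrix (Fin n) (Fin n) F | ¬ IsUnit A}) := by
  constructor
  · intro h
    have hV : ∀ a ∉ T, ∀ b ∉ T, a * b ∉ T := fun a ha b hb hab => (h a b hab).elim ha hb
    by_cases h1 : (1 : Matrix (Fin n) (Fin n) F) ∈ T
    · exact (eq_univ_or_units T hmul hV h1).imp_right Or.inl
    · rcases eq_univ_or_units Tᶜ hV (by simpa using hmul) h1 with h2 | h2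
      · exact absurd (Set.compl_univ_iff.mp h2) hne.ne_empty
      · refine Or.inr (Or.inr ?_)
        rw [← compl_compl T, h2]
        rfl
  · rintro (rfl | rfl | rfl) x y hxy
    · exact Or.inl trivial
    · left
      simp only [Set.mem_ofPred_eq, Matrix.isUnit_iff_isUnit_det, Matrix.det_mul] at hxy ⊢
      exact isUnit_of_mul_isUnit_left hxy
    · by_contra! hc
      simp only [Set.mem_ofPred_eq, not_not] at hc hxy
      exact hxy (hc.1.mul hc.2)
end
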